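/- Almost all cographs have a generalized cospectral mate. Precisely, letting c(n) denote the number of isomorphism classes of cographs on n vertices and g(n) denote the number of isomorphism classes of cographs on n vertices G for which there exists a graph H on n vertices that is generalized cospectral with G but not isomorphic to G, one has lim_{n→∞} g(n)/c(n) = 1. -/

import Mathlib

open SimpleGraph
/-- The characteristic polynomial (over `ℝ`) of the adjacency matrix of a finite graph. -/
noncomputable def adjCharPoly {V : Type} [Fintype V] [DecidableEq V] (G : SimpleGraph V) :
    Polynomial ℝ :=
  letI := Classical.decRel G.Adj
  Matrix.charpoly (G.adjMatrix ℝ)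

/-- Two finite graphs are cospectral if their adjacency matrices have the same
characteristic polynomial. -/
def Cospectral {V W : Type} [Fintype V] [DecidableEq V] [Fintype W] [DecidableEq W]
    (G : SimpleGraph V) (H : SimpleGraph W) : Prop :=
  adjCharPoly G = adjCharPoly H

/-- Generalized cospectrality: the graphs are cospectral and so are their complements. -/
def GenCospectral {V W : Type} [Fintype V] [DecidableEq V] [Fintype W] [DecidableEq W]
    (G : SimpleGraph V) (H : SimpleGraph W) : Prop :=
  Cospectral G H ∧ Cospectral Gᶜ Hᶜ

/-- A cograph is a graph with no induced path `P₄` (on 4 vertices). -/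
def IsCograph {V : Type} (G : SimpleGraph V) : Prop :=
  ¬ ∃ f : Fin 4 ↪ V, ∀ i j, G.Adj (f i) (f j) ↔ (SimpleGraph.pathGraph 4).Adj i j

/-- The number of isomorphism classes of graphs on `n` vertices satisfying an
isomorphism-invariant property `P`. -/
noncomputable def classCount (n : ℕ) (P : SimpleGraph (Fin n) → Prop) : ℕ :=
  Nat.card (Quot fun G H : {G : SimpleGraph (Fin n) // P G} => Nonempty (G.1 ≃g H.1))

/-! ### Mates -/

lemma adjCharPoly_iso {V W : Type} [Fintype V] [DecidableEq V] [Fintype W] [DecidableEq W]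
    {G : SimpleGraph V} {H : SimpleGraph W} (e : G ≃g H) : adjCharPoly G = adjCharPoly H := by
  classical
  unfold adjCharPoly
  rw [← Matrix.charpoly_reindex e.toEquiv]
  congr 1
  ext i j
  simp only [Matrix.reindex_apply, Matrix.submatrix_apply, adjMatrix_apply]
  have : G.Adj (e.toEquiv.symm i) (e.toEquiv.symm j) ↔ H.Adj i j := by
    have := e.map_adj_iff (v := e.toEquiv.symm i) (w := e.toEquiv.symm j)
    rw [← this]
    change H.Adj (e.toEquiv (e.toEquiv.symm i)) (e.toEquiv (e.toEquiv.symm j)) ↔ _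
    rw [Equiv.apply_symm_apply, Equiv.apply_symm_apply]
  simp [this]

lemma charpoly_of_intertwine {n : Type} [Fintype n] [DecidableEq n] {X Y P : Matrix n n ℝ}
    (hP : IsUnit P) (h : X * P = P * Y) : X.charpoly = Y.charpoly := by
  obtain ⟨U, rfl⟩ := hP
  rw [← Matrix.charpoly_units_conj U Y, ← h, mul_assoc]
  simp

open Classical in
/-- indicator -/
noncomputable def ind (p : Prop) : ℝ := if p then 1 else 0

lemma ite_eq_ind (p : Prop) [Decidable p] : (if p then (1 : ℝ) else 0) = ind p := by
  unfold ind; congr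

/-- intertwining of two graphs on the same vertex set, by a matrix fixing the all-ones vector -/
def Twine {K : Type} [Fintype K] [DecidableEq K] (A B : SimpleGraph K) : Prop :=
  ∃ Q : Matrix K K ℝ, IsUnit Q ∧ (∀ i, ∑ j, Q i j = 1) ∧ (∀ j, ∑ i, Q i j = 1) ∧
    ∀ i j, (∑ l, ind (A.Adj i l) * Q l j) =
      ∑ l, Q i l * ind (B.Adj l j)

lemma Twine.compl {K : Type} [Fintype K] [DecidableEq K] {A B : SimpleGraph K}
    (h : Twine A B) : Twine Aᶜ Bᶜ := by
  classical
  obtain ⟨Q, hQ, h1, h2, h3⟩ := h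
  refine ⟨Q, hQ, h1, h2, fun i j => ?_⟩
  have e : ∀ (G : SimpleGraph K) (a b : K), ind (Gᶜ.Adj a b) =
      1 - (if a = b then 1 else 0) - ind (G.Adj a b) := by
    intro G a b
    unfold ind
    by_cases hab : a = b
    · subst hab; simp
    · by_cases hG : G.Adj a b <;> simp [hab, hG]
  have h4 := h3 i j
  simp only [e, sub_mul, mul_sub, Finset.sum_sub_distrib, one_mul, mul_one, h1, h2]
  rw [h4]
  have z1 : ∑ l, (if i = l then (1 : ℝ) else 0) * Q l j = Q i j := by
    rw [Finset.sum_eq_single i] <;> simp +contextual [eq_comm]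
  have z2 : ∑ l, Q i l * (if l = j then (1 : ℝ) else 0) = Q i j := by
    rw [Finset.sum_eq_single j] <;> simp +contextual [eq_comm]
  rw [z1, z2]

lemma adjCharPoly_block {K R : Type} [Fintype K] [DecidableEq K] [Fintype R] [DecidableEq R]
    {A B : SimpleGraph K} (hAB : Twine A B) (G H : SimpleGraph (K ⊕ R))
    (hG : ∀ i j, G.Adj (Sum.inl i) (Sum.inl j) ↔ A.Adj i j)
    (hH : ∀ i j, H.Adj (Sum.inl i) (Sum.inl j) ↔ B.Adj i j)
    (hR : ∀ r s, G.Adj (Sum.inr r) (Sum.inr s) ↔ H.Adj (Sum.inr r) (Sum.inr s))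
    (p : R → Prop) (hp : ∀ i r, G.Adj (Sum.inl i) (Sum.inr r) ↔ p r)
    (hq : ∀ i r, H.Adj (Sum.inl i) (Sum.inr r) ↔ p r) :
    adjCharPoly G = adjCharPoly H := by
  classical
  obtain ⟨Q, hQ, h1, h2, h3⟩ := hAB
  have hp' : ∀ i r, G.Adj (Sum.inr r) (Sum.inl i) ↔ p r := fun i r => by
    rw [G.adj_comm]; exact hp i r
  have hq' : ∀ i r, H.Adj (Sum.inr r) (Sum.inl i) ↔ p r := fun i r => by
    rw [H.adj_comm]; exact hq i r
  unfold adjCharPoly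
  refine charpoly_of_intertwine (P := Matrix.fromBlocks Q 0 0 1) ?_ ?_
  · rw [Matrix.isUnit_iff_isUnit_det] at hQ ⊢
    simpa [Matrix.det_fromBlocks_zero₂₁] using hQ
  · ext (i | r) (j | s)
    · have := h3 i j
      simp only [Matrix.mul_apply, Fintype.sum_sum_type, adjMatrix_apply, Matrix.fromBlocks_apply₁₁,
        Matrix.fromBlocks_apply₂₁, Matrix.fromBlocks_apply₁₂, hG, hH, Matrix.zero_apply, mul_zero,
        zero_mul, Finset.sum_const_zero, add_zero, ite_eq_ind]
      exact this
    · simp only [Matrix.mul_apply, Fintype.sum_sum_type, adjMatrix_apply, Matrix.fromBlocks_apply₁₁,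
        Matrix.fromBlocks_apply₂₁, Matrix.fromBlocks_apply₁₂, Matrix.fromBlocks_apply₂₂, hp, hq,
        Matrix.zero_apply, mul_zero, zero_mul, Finset.sum_const_zero, add_zero, zero_add,
        Matrix.one_apply, ← Finset.sum_mul, h1]
      simp
    · simp only [Matrix.mul_apply, Fintype.sum_sum_type, adjMatrix_apply, Matrix.fromBlocks_apply₁₁,
        Matrix.fromBlocks_apply₂₁, Matrix.fromBlocks_apply₁₂, Matrix.fromBlocks_apply₂₂, hp', hq',
        Matrix.zero_apply, mul_zero, zero_mul, Finset.sum_const_zero, add_zero, zero_add,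
        Matrix.one_apply, ← Finset.mul_sum, h2]
      rw [Finset.sum_eq_single r] <;> simp +contextual [eq_comm]
    · simp only [Matrix.mul_apply, Fintype.sum_sum_type, adjMatrix_apply, Matrix.fromBlocks_apply₁₁,
        Matrix.fromBlocks_apply₂₁, Matrix.fromBlocks_apply₁₂, Matrix.fromBlocks_apply₂₂, hp', hq', hR,
        Matrix.zero_apply, mul_zero, zero_mul, Finset.sum_const_zero, add_zero, zero_add,
        Matrix.one_apply]
      rw [Finset.sum_eq_single s, Finset.sum_eq_single r] <;> simp +contextual [eq_comm]

lemma genCospectral_block {K R : Type} [Fintype K] [DecidableEq K] [Fintype R] [DecidableEq R]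
    {A B : SimpleGraph K} (hAB : Twine A B) (G H : SimpleGraph (K ⊕ R))
    (hG : ∀ i j, G.Adj (Sum.inl i) (Sum.inl j) ↔ A.Adj i j)
    (hH : ∀ i j, H.Adj (Sum.inl i) (Sum.inl j) ↔ B.Adj i j)
    (hR : ∀ r s, G.Adj (Sum.inr r) (Sum.inr s) ↔ H.Adj (Sum.inr r) (Sum.inr s))
    (p : R → Prop) (hp : ∀ i r, G.Adj (Sum.inl i) (Sum.inr r) ↔ p r)
    (hq : ∀ i r, H.Adj (Sum.inl i) (Sum.inr r) ↔ p r) :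
    GenCospectral G H := by
  refine ⟨adjCharPoly_block hAB G H hG hH hR p hp hq,
    adjCharPoly_block hAB.compl Gᶜ Hᶜ ?_ ?_ ?_ (fun r => ¬ p r) ?_ ?_⟩
  · intro i j; simp [hG]
  · intro i j; simp [hH]
  · intro i j; simp [hR]
  · intro i j; simp [hp]
  · intro i j; simp [hq]

/-- `A` occurs as a module in `G`. -/
def HasMod {K V : Type} (A : SimpleGraph K) (G : SimpleGraph V) : Prop :=
  ∃ f : K ↪ V, (∀ i j, G.Adj (f i) (f j) ↔ A.Adj i j) ∧
    ∀ v, v ∉ Set.range f → ∀ i j, G.Adj (f i) v ↔ G.Adj (f j) v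

lemma IsCograph.iso {V W : Type} {G : SimpleGraph V} {H : SimpleGraph W} (e : G ≃g H)
    (h : IsCograph G) : IsCograph H := by
  rintro ⟨f, hf⟩
  refine h ⟨f.trans e.symm.toEquiv.toEmbedding, fun i j => ?_⟩
  rw [← hf]
  exact e.symm.map_adj_iff

lemma exists_mate_aux {K V : Type} [Fintype K] [DecidableEq K] [Nonempty K] [Fintype V]
    [DecidableEq V]
    {A B : SimpleGraph K} (hAB : Twine A B) (hB : ¬ IsCograph B) (G : SimpleGraph V)
    (hG : IsCograph G) (hA : HasMod A G) :
    ∃ H : SimpleGraph V, GenCospectral G H ∧ ¬ Nonempty (G ≃g H) := by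
  classical
  obtain ⟨f, hf, hmod⟩ := hA
  let R := {v : V // v ∉ Set.range f}
  let e : K ⊕ R ≃ V := (Equiv.sumCongr (Equiv.ofInjective f f.injective) (Equiv.refl _)).trans
    (Equiv.Set.sumCompl (Set.range f))
  have el : ∀ i, e (Sum.inl i) = f i := fun i => rfl
  have er : ∀ r : R, e (Sum.inr r) = r.1 := fun i => rfl
  let G' : SimpleGraph (K ⊕ R) := G.comap e
  let H' : SimpleGraph (K ⊕ R) :=
    { Adj := fun a b => match a, b with
        | Sum.inl i, Sum.inl j => B.Adj i j
        | Sum.inl i, Sum.inr r => G'.Adj (Sum.inl i) (Sum.inr r)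
        | Sum.inr r, Sum.inl i => G'.Adj (Sum.inr r) (Sum.inl i)
        | Sum.inr r, Sum.inr s => G'.Adj (Sum.inr r) (Sum.inr s)
      symm := ⟨by
        rintro (i | r) (j | s) h
        · exact B.adj_symm h
        · exact G'.adj_symm h
        · exact G'.adj_symm h
        · exact G'.adj_symm h⟩
      loopless := ⟨by
        rintro (i | r) h
        · exact B.irrefl h
        · exact G'.irrefl h⟩ }
  let H : SimpleGraph V := H'.comap e.symm
  have iG : G' ≃g G := Iso.comap e G
  have iH : H ≃g H' := Iso.comap e.symm H'
  have hgc : GenCospectral G' H' := by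
    refine genCospectral_block hAB G' H' ?_ ?_ ?_
      (fun r => G.Adj (f (Classical.arbitrary K)) r.1) ?_ ?_
    · intro i j; simp only [G', comap_adj, el]; exact hf i j
    · intro i j; rfl
    · intro r s; rfl
    · intro i r; simp only [G', comap_adj, el, er]; exact hmod r.1 r.2 _ _
    · intro i r
      change G'.Adj _ _ ↔ _
      simp only [G', comap_adj, el, er]; exact hmod r.1 r.2 _ _
  have cG : G'ᶜ ≃g Gᶜ := ⟨iG.toEquiv, by intro a b; simp [iG.map_adj_iff]⟩
  have cH : Hᶜ ≃g H'ᶜ := ⟨iH.toEquiv, by intro a b; simp [iH.map_adj_iff]⟩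
  refine ⟨H, ⟨?_, ?_⟩, ?_⟩
  · exact ((adjCharPoly_iso iG).symm.trans hgc.1).trans (adjCharPoly_iso iH).symm
  · exact ((adjCharPoly_iso cG).symm.trans hgc.2).trans (adjCharPoly_iso cH).symm
  · rintro ⟨i⟩
    have hco : IsCograph H' := (hG.iso i).iso iH
    refine hB ?_
    rintro ⟨g, hg⟩
    exact hco ⟨g.trans ⟨Sum.inl, Sum.inl_injective⟩, fun a b => hg a b⟩

/-! ### The concrete pair -/

def adjA : Fin 9 → Fin 9 → Bool := ![
  ![false, false, false, false, false, true, false, true, false],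
  ![false, false, false, false, false, false, true, false, true],
  ![false, false, false, false, false, false, true, false, true],
  ![false, false, false, false, false, false, true, false, true],
  ![false, false, false, false, false, false, false, false, true],
  ![true, false, false, false, false, false, false, true, false],
  ![false, true, true, true, false, false, false, false, true],
  ![true, false, false, false, false, true, false, false, false],
  ![false, true, true, true, true, false, true, false, false]]

def adjB : Fin 9 → Fin 9 → Bool := ![
  ![false, false, false, false, false, true, false, true, true],
  ![false, false, false, false, false, false, true, false, true],
  ![false, false, false, false, false, false, true, false, false],
  ![false, false, false, false, false, false, true, false, false],
  ![false, false, false, false, false, false, true, false, false],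
  ![true, false, false, false, false, false, false, true, true],
  ![false, true, true, true, true, false, false, false, false],
  ![true, false, false, false, false, true, false, false, true],
  ![true, true, false, false, false, true, false, true, false]]

def matM : Fin 9 → Fin 9 → ℤ := ![
  ![-4, 1, 1, 1, 1, -1, 2, 4, 0], ![1, 2, 4, 1, -4, 1, -1, 1, 0],
  ![1, 2, -4, 0, 5, 1, -1, 1, 0], ![1, 2, 1, 0, 0, 1, -1, 1, 0],
  ![1, -3, 2, 2, 2, 1, -1, 1, 0], ![4, 1, 1, 1, 1, 0, 2, -5, 0],
  ![0, 0, 0, 0, 0, 0, 0, 0, 5], ![-1, 1, 1, 1, 1, 0, 2, 0, 0],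
  ![2, -1, -1, -1, -1, 2, 3, 2, 0]]

def matN : Fin 9 → Fin 9 → ℤ := ![
  ![8, 1, 1, 1, 1, 8, 0, -17, 2], ![1, 2, 2, 2, -3, 1, 0, 1, -1],
  ![1, -8, -8, 17, 2, 1, 0, 1, -1], ![1, 17, 12, -28, 2, 1, 0, 1, -1],
  ![1, -8, -3, 12, 2, 1, 0, 1, -1], ![-17, 1, 1, 1, 1, -12, 0, 28, 2],
  ![2, -1, -1, -1, -1, 2, 0, 2, 3], ![8, 1, 1, 1, 1, 3, 0, -12, 2],
  ![0, 0, 0, 0, 0, 0, 5, 0, 0]]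

def gA : SimpleGraph (Fin 9) where
  Adj i j := adjA i j = true
  symm := ⟨by decide⟩
  loopless := ⟨by decide⟩

def gB : SimpleGraph (Fin 9) where
  Adj i j := adjB i j = true
  symm := ⟨by decide⟩
  loopless := ⟨by decide⟩

set_option maxRecDepth 100000 in
lemma matNM : ∀ i j, ∑ l, matN i l * matM l j = if i = j then 25 else 0 := by decide

set_option maxRecDepth 100000 in
lemma matM_row : ∀ i, ∑ j, matM i j = 5 := by decide

set_option maxRecDepth 100000 in
lemma matM_col : ∀ j, ∑ i, matM i j = 5 := by decide

set_option maxRecDepth 100000 in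
lemma matM_twine : ∀ i j, (∑ l, (if adjA i l = true then 1 else 0) * matM l j) =
    ∑ l, matM i l * (if adjB l j = true then 1 else 0) := by decide

lemma twineAB : Twine gA gB := by
  classical
  refine ⟨Matrix.of fun i j => (matM i j : ℝ) / 5, ?_, ?_, ?_, ?_⟩
  · refine IsUnit.of_mul_eq_one_right (Matrix.of fun i j => (matN i j : ℝ) / 5) ?_
    ext i j
    have := matNM i j
    have h2 : ((∑ l, matN i l * matM l j : ℤ) : ℝ) = if i = j then 25 else 0 := by
      rw [this]; split_ifs <;> simp
    push_cast at h2
    simp only [Matrix.mul_apply, Matrix.of_apply, Matrix.one_apply]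
    calc ∑ l, (matN i l : ℝ) / 5 * ((matM l j : ℝ) / 5)
        = (∑ l, (matN i l : ℝ) * (matM l j : ℝ)) / 25 := by
          rw [Finset.sum_div]; refine Finset.sum_congr rfl fun l _ => by ring
      _ = _ := by rw [h2]; split_ifs <;> norm_num
  · intro i
    have : ((∑ j, matM i j : ℤ) : ℝ) = 5 := by rw [matM_row]; norm_num
    push_cast at this
    simp only [Matrix.of_apply, ← Finset.sum_div, this]; norm_num
  · intro i
    have : ((∑ j, matM j i : ℤ) : ℝ) = 5 := by rw [matM_col]; norm_num
    push_cast at this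
    simp only [Matrix.of_apply, ← Finset.sum_div, this]; norm_num
  · intro i j
    have h := congrArg (fun z : ℤ => (z : ℝ) / 5) (matM_twine i j)
    simp only [Int.cast_sum, Int.cast_mul, Int.cast_ite, Int.cast_one, Int.cast_zero,
      Finset.sum_div, ite_eq_ind] at h
    simp only [Matrix.of_apply, gA, gB]
    convert h using 2
    · rw [mul_div_assoc]
    · rw [mul_div_right_comm]

lemma gB_not_cograph : ¬ IsCograph gB := by
  intro h
  refine h ⟨⟨![8, 1, 6, 2], by decide⟩, ?_⟩
  simp only [pathGraph_adj, gB]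
  decide

lemma isCograph_compl {V : Type} {G : SimpleGraph V} (h : IsCograph G) : IsCograph Gᶜ := by
  rintro ⟨f, hf⟩
  let g : Fin 4 ↪ Fin 4 := ⟨![1, 3, 0, 2], by decide⟩
  refine h ⟨g.trans f, fun i j => ?_⟩
  have h1 := hf (g i) (g j)
  rw [compl_adj] at h1
  have h2 : ∀ i j, (pathGraph 4).Adj i j ↔ g i ≠ g j ∧ ¬ (pathGraph 4).Adj (g i) (g j) := by
    simp only [pathGraph_adj, g]; decide
  rw [h2, ← h1]
  simp only [Function.Embedding.trans_apply, ne_eq, f.injective.eq_iff]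
  constructor
  · intro h3
    have : g i ≠ g j := fun h4 => by rw [h4] at h3; exact G.irrefl h3
    exact ⟨this, fun h4 => h4.2 h3⟩
  · rintro ⟨h3, h4⟩
    by_contra h5
    exact h4 ⟨h3, h5⟩

lemma HasMod.compl {K V : Type} {A : SimpleGraph K} {G : SimpleGraph V} (h : HasMod A G) :
    HasMod Aᶜ Gᶜ := by
  obtain ⟨f, h1, h2⟩ := h
  refine ⟨f, fun i j => by simp [h1, f.injective.eq_iff], fun v hv i j => ?_⟩
  have n1 : f i ≠ v := fun h => hv ⟨i, h⟩
  have n2 : f j ≠ v := fun h => hv ⟨j, h⟩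
  simp [n1, n2, h2 v hv i j]

lemma exists_mate {V : Type} [Fintype V] [DecidableEq V] (G : SimpleGraph V)
    (hG : IsCograph G) (hA : HasMod gA G ∨ HasMod gAᶜ G) :
    ∃ H : SimpleGraph V, GenCospectral G H ∧ ¬ Nonempty (G ≃g H) := by
  rcases hA with hA | hA
  · exact exists_mate_aux twineAB gB_not_cograph G hG hA
  · have h1 := hA.compl
    rw [compl_compl] at h1
    obtain ⟨H, h2, h3⟩ := exists_mate_aux twineAB gB_not_cograph Gᶜ (isCograph_compl hG) h1
    refine ⟨Hᶜ, ⟨?_, ?_⟩, ?_⟩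
    · have := h2.2; rwa [compl_compl] at this
    · have := h2.1; rwa [Cospectral, compl_compl]
    · rintro ⟨i⟩
      exact h3 ⟨⟨i.toEquiv, by
        intro a b
        have := i.map_adj_iff (v := a) (w := b)
        simp only [compl_adj] at this ⊢
        have hinj : i.toEquiv a = i.toEquiv b ↔ a = b := i.toEquiv.injective.eq_iff
        have e1 : (i a = i b) ↔ a = b := hinj
        by_cases hab : a = b
        · subst hab; simp
        · have : ¬ (i a = i b) := fun h => hab (e1.mp h)
          change H.Adj (i a) (i b) ↔ _
          tauto⟩⟩


section Analytic

/-! ### Analytic part -/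

noncomputable def hh (y : ℝ) : ℝ := -Real.log (1 - y) - y

lemma hh_nonneg {y : ℝ} (h1 : y < 1) : 0 ≤ hh y := by
  have := Real.log_le_sub_one_of_pos (show 0 < 1 - y by linarith)
  unfold hh; linarith

lemma hh_le {y : ℝ} (h1 : y < 1) : hh y ≤ y ^ 2 / (1 - y) := by
  have h2 : 0 < 1 - y := by linarith
  have := Real.log_le_sub_one_of_pos (inv_pos.mpr h2)
  rw [Real.log_inv] at this
  unfold hh
  have e : y ^ 2 / (1 - y) = (1 - y)⁻¹ - 1 - y := by field_simp; ring
  linarith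

lemma prod_eq_exp (a : ℕ → ℕ) (a0 : a 0 = 0) {x : ℝ} (hx0 : 0 < x) (hx1 : x < 1) (N : ℕ) :
    ∏ m ∈ Finset.Icc 1 N, ((1 - x ^ m)⁻¹) ^ (a m) =
      Real.exp (∑ m ∈ Finset.range (N + 1), (a m : ℝ) * x ^ m +
        ∑ m ∈ Finset.range (N + 1), (a m : ℝ) * hh (x ^ m)) := by
  rw [← Finset.sum_add_distrib, Finset.range_eq_Ico, Finset.sum_eq_sum_Ico_succ_bot (by omega)]
  simp only [a0, Nat.cast_zero, zero_mul, zero_add]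
  rw [Real.exp_sum]
  have : Finset.Icc 1 N = Finset.Ico 1 (N + 1) := by ext; simp
  rw [this]
  refine Finset.prod_congr rfl fun m hm => ?_
  simp only [Finset.mem_Ico] at hm
  have h1 : x ^ m < 1 := pow_lt_one₀ hx0.le hx1 (by omega)
  have h2 : 0 < 1 - x ^ m := by linarith
  unfold hh
  rw [← mul_add, Real.exp_nat_mul]
  congr 1
  rw [show x ^ m + (-Real.log (1 - x ^ m) - x ^ m) = -Real.log (1 - x ^ m) by ring, Real.exp_neg,
    Real.exp_log h2]

lemma exp_sub_mono {s t H : ℝ} (hs : 0 ≤ s) (hst : s ≤ t) (hH : 0 ≤ H) :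
    Real.exp (s + H) - s ≤ Real.exp (t + H) - t := by
  have h1 := Real.add_one_le_exp (t - s)
  have h2 : Real.exp (t + H) = Real.exp (s + H) * Real.exp (t - s) := by
    rw [← Real.exp_add]; ring_nf
  have h3 : 1 ≤ Real.exp (s + H) := Real.one_le_exp (by linarith)
  rw [h2]
  nlinarith

/-- Positive radius of convergence. -/
lemma radius_pos (t : ℕ → ℕ) (t0 : t 0 = 0)
    (h3 : ∀ (x : ℝ) (N : ℕ), 0 < x → x < 1 →
      ∑ m ∈ Finset.range (N + 2), (t m : ℝ) * x ^ m ≤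
        x + ∏ m ∈ Finset.Icc 1 N, ((1 - x ^ m)⁻¹) ^ (t m) - 1
          - ∑ m ∈ Finset.range (N + 1), (t m : ℝ) * x ^ m) (N : ℕ) :
    ∑ m ∈ Finset.range (N + 1), (t m : ℝ) * (1 / 16 : ℝ) ^ m ≤ 1 / 4 := by
  induction N with
  | zero => simp [t0]
  | succ N ih =>
    have h := h3 (1 / 16) N (by norm_num) (by norm_num)
    rw [prod_eq_exp t t0 (by norm_num) (by norm_num)] at h
    set s := ∑ m ∈ Finset.range (N + 1), (t m : ℝ) * (1 / 16 : ℝ) ^ m with hs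
    have hs0 : 0 ≤ s := Finset.sum_nonneg fun i _ => by positivity
    have hH : ∑ m ∈ Finset.range (N + 1), (t m : ℝ) * hh ((1 / 16) ^ m) ≤ s / 15 := by
      rw [hs, Finset.sum_div]
      refine Finset.sum_le_sum fun m _ => ?_
      rcases Nat.eq_zero_or_pos m with rfl | hm
      · simp [t0]
      · rw [mul_div_assoc]
        refine mul_le_mul_of_nonneg_left ?_ (Nat.cast_nonneg _)
        have hy : (1 / 16 : ℝ) ^ m ≤ 1 / 16 := by
          simpa using pow_le_pow_of_le_one (by norm_num : (0 : ℝ) ≤ 1 / 16) (by norm_num) hm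
        have hy0 : 0 < (1 / 16 : ℝ) ^ m := by positivity
        refine (hh_le (by linarith)).trans ?_
        rw [div_le_div_iff₀ (by linarith) (by norm_num)]
        nlinarith
    set H := ∑ m ∈ Finset.range (N + 1), (t m : ℝ) * hh ((1 / 16) ^ m)
    have e1 : Real.exp (s + H) ≤ Real.exp (16 / 15 * s) := Real.exp_le_exp.mpr (by linarith)
    have e2 := Real.abs_exp_sub_one_sub_id_le (x := 16 / 15 * s)
      (by rw [abs_of_nonneg (by positivity)]; linarith)
    have e3 := (abs_le.mp e2).2
    nlinarith

theorem analytic_core (t b : ℕ → ℕ) (k : ℕ) (hk : 1 ≤ k)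
    (t0 : t 0 = 0) (tpos : ∀ n, 1 ≤ n → 1 ≤ t n) (hbt : ∀ n, b n ≤ t n)
    (hsup : ∀ m n, 1 ≤ m → m < n → t m * t n ≤ t (m + n))
    (h1 : ∀ (x τ : ℝ), 0 < x → x < 1 →
      (∀ N, ∑ m ∈ Finset.range (N + 1), (t m : ℝ) * x ^ m ≤ τ) →
      ∀ N, ∏ m ∈ Finset.Icc 1 N, ((1 - x ^ m)⁻¹) ^ (t m) ≤ 1 - x + 2 * τ)
    (h2 : ∀ (x : ℝ) (N : ℕ), 0 < x → x < 1 → k ≤ N + 1 →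
      ∑ m ∈ Finset.range (N + 2), (b m : ℝ) * x ^ m ≤
        x - x ^ k + ∏ m ∈ Finset.Icc 1 N, ((1 - x ^ m)⁻¹) ^ (b m) - 1
          - ∑ m ∈ Finset.range (N + 1), (b m : ℝ) * x ^ m)
    (h3 : ∀ (x : ℝ) (N : ℕ), 0 < x → x < 1 →
      ∑ m ∈ Finset.range (N + 2), (t m : ℝ) * x ^ m ≤
        x + ∏ m ∈ Finset.Icc 1 N, ((1 - x ^ m)⁻¹) ^ (t m) - 1
          - ∑ m ∈ Finset.range (N + 1), (t m : ℝ) * x ^ m) :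
    Filter.Tendsto (fun n => (b n : ℝ) / (t n : ℝ)) Filter.atTop (nhds 0) := by
  have b0 : b 0 = 0 := by have := hbt 0; omega
  set T : ℕ → ℝ → ℝ := fun N x => ∑ m ∈ Finset.range (N + 1), (t m : ℝ) * x ^ m with hT
  have Tcont : ∀ N, Continuous (T N) := fun N => by simp only [hT]; fun_prop
  -- a priori bound
  have key : ∀ x τ : ℝ, 0 < x → x < 1 → HasSum (fun m => (t m : ℝ) * x ^ m) τ → τ ≤ 2 := by
    intro x τ hx0 hx1 hs
    have hle : ∀ N, T N x ≤ τ := fun N =>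
      sum_le_hasSum _ (fun i _ => by positivity) hs
    have hp := h1 x τ hx0 hx1 hle
    have he : Real.exp τ ≤ 1 - x + 2 * τ := by
      have hl : Filter.Tendsto (fun N => Real.exp (T N x)) Filter.atTop (nhds (Real.exp τ)) := by
        refine (Real.continuous_exp.tendsto τ).comp ?_
        exact (hs.tendsto_sum_nat).comp (Filter.tendsto_add_atTop_nat 1)
      refine le_of_tendsto' hl fun N => le_trans ?_ (hp N)
      rw [prod_eq_exp t t0 hx0 hx1]
      refine Real.exp_le_exp.mpr ?_
      have : 0 ≤ ∑ m ∈ Finset.range (N + 1), (t m : ℝ) * hh (x ^ m) := by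
        refine Finset.sum_nonneg fun m _ => ?_
        rcases Nat.eq_zero_or_pos m with rfl | hm
        · simp [t0]
        · exact mul_nonneg (Nat.cast_nonneg _) (hh_nonneg (pow_lt_one₀ hx0.le hx1 (by omega)))
      simp only [hT]; linarith
    have hτ0 : 0 ≤ τ := hs.nonneg fun i => by positivity
    have := Real.quadratic_le_exp_of_nonneg hτ0
    by_contra hcon
    push Not at hcon
    nlinarith
  -- the radius
  set S : Set ℝ := {x | x ∈ Set.Icc (0 : ℝ) 1 ∧ ∀ N, T N x ≤ 2} with hS
  have Sclosed : IsClosed S := by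
    have : S = Set.Icc (0 : ℝ) 1 ∩ ⋂ N, {x | T N x ≤ 2} := by
      ext x; simp [hS]
    rw [this]
    exact isClosed_Icc.inter (isClosed_iInter fun N => isClosed_le (Tcont N) continuous_const)
  have S16 : (1 / 16 : ℝ) ∈ S := by
    refine ⟨by norm_num, fun N => ?_⟩
    have := radius_pos t t0 h3 N
    simp only [hT]; linarith
  have Sbdd : BddAbove S := ⟨1, fun x hx => hx.1.2⟩
  set ρ := sSup S with hρ
  have ρS : ρ ∈ S := Sclosed.csSup_mem ⟨_, S16⟩ Sbdd
  have ρpos : 0 < ρ := lt_of_lt_of_le (by norm_num) (le_csSup Sbdd S16)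
  have ρlt : ρ < 1 := by
    rcases lt_or_eq_of_le ρS.1.2 with h | h
    · exact h
    · exfalso
      have h4 := ρS.2 3
      rw [h] at h4
      simp only [hT, Finset.sum_range_succ, Finset.sum_range_zero, one_pow, mul_one] at h4
      have a1 : (1 : ℝ) ≤ t 1 := by exact_mod_cast tpos 1 (by norm_num)
      have a2 : (1 : ℝ) ≤ t 2 := by exact_mod_cast tpos 2 (by norm_num)
      have a3 : (1 : ℝ) ≤ t 3 := by exact_mod_cast tpos 3 (by norm_num)
      have a0 : (0 : ℝ) ≤ t 0 := Nat.cast_nonneg _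
      linarith
  -- beyond the radius
  have beyond : ∀ x, ρ < x → x < 1 → ∃ m, 1 ≤ m ∧ 1 < (t m : ℝ) * x ^ m := by
    intro x hx hx1
    by_contra hcon
    push Not at hcon
    obtain ⟨y, hy, hyx⟩ := exists_between hx
    have hx0 : 0 < x := ρpos.trans hx
    have hy0 : 0 < y := ρpos.trans hy
    have hsum : Summable (fun m => (t m : ℝ) * y ^ m) := by
      refine Summable.of_nonneg_of_le (fun m => by positivity) (fun m => ?_)
        (summable_geometric_of_lt_one (r := y / x) (by positivity) ((div_lt_one hx0).mpr hyx))
      rcases Nat.eq_zero_or_pos m with rfl | hm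
      · simp [t0]
      · have := hcon m hm
        rw [div_pow, le_div_iff₀ (by positivity)]
        have hyp : 0 < y ^ m := by positivity
        nlinarith
    have h5 := key y _ hy0 (hyx.trans hx1) hsum.hasSum
    have : y ∈ S := ⟨⟨hy0.le, (hyx.trans hx1).le⟩, fun N =>
      (hsum.sum_le_tsum _ (fun i _ => by positivity)).trans h5⟩
    exact absurd (le_csSup Sbdd this) (not_le.mpr hy)
  -- the sum at the radius
  have ρsum : Summable (fun m => (t m : ℝ) * ρ ^ m) := by
    refine summable_of_sum_range_le (c := 2) (fun m => by positivity) fun n => ?_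
    refine le_trans ?_ (ρS.2 n)
    simp only [hT]
    rw [Finset.sum_range_succ]
    have : 0 ≤ (t n : ℝ) * ρ ^ n := by positivity
    linarith
  set τ := ∑' m, (t m : ℝ) * ρ ^ m with hτ
  have τ0 : 0 ≤ τ := tsum_nonneg fun m => by positivity
  -- the correction term
  set r := Real.sqrt ρ with hr
  have rpos : 0 < r := Real.sqrt_pos.mpr ρpos
  have rsq : r ^ 2 = ρ := Real.sq_sqrt ρpos.le
  have rlt : r < 1 := by nlinarith
  have ρr : ρ < r := by nlinarith
  have hbound : ∀ x ∈ Set.Icc 0 r, ∀ m, 0 ≤ (t m : ℝ) * hh (x ^ m) ∧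
      (t m : ℝ) * hh (x ^ m) ≤ (t m : ℝ) * ρ ^ m * (1 - r)⁻¹ := by
    intro x hx m
    rcases Nat.eq_zero_or_pos m with rfl | hm
    · simp [t0]
    · have hx1 : x < 1 := hx.2.trans_lt rlt
      have hxm : x ^ m < 1 := pow_lt_one₀ hx.1 hx1 (by omega)
      refine ⟨mul_nonneg (Nat.cast_nonneg _) (hh_nonneg hxm), ?_⟩
      rw [mul_assoc]
      refine mul_le_mul_of_nonneg_left ((hh_le hxm).trans ?_) (Nat.cast_nonneg _)
      rw [div_eq_mul_inv]
      have e1 : (x ^ m) ^ 2 ≤ ρ ^ m := by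
        rw [← pow_mul, mul_comm, pow_mul, ← rsq]
        exact pow_le_pow_left₀ (sq_nonneg _) (pow_le_pow_left₀ hx.1 hx.2 2) m
      have e2 : x ^ m ≤ r := by
        calc x ^ m ≤ x ^ 1 := pow_le_pow_of_le_one hx.1 hx1.le hm
          _ ≤ r := by simpa using hx.2
      have e3 : (1 - x ^ m)⁻¹ ≤ (1 - r)⁻¹ := inv_anti₀ (by linarith) (by linarith)
      have e4 : 0 ≤ (1 - x ^ m)⁻¹ := inv_nonneg.mpr (by linarith)
      exact mul_le_mul e1 e3 e4 (by positivity)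
  set H : ℝ → ℝ := fun x => ∑' m, (t m : ℝ) * hh (x ^ m) with hH
  have Hcont : ContinuousOn H (Set.Icc 0 r) := by
    refine continuousOn_tsum (u := fun m => (t m : ℝ) * ρ ^ m * (1 - r)⁻¹) (fun m => ?_)
      (ρsum.mul_right _) (fun m x hx => ?_)
    · rcases Nat.eq_zero_or_pos m with rfl | hm
      · simp only [t0, Nat.cast_zero, zero_mul]; exact continuousOn_const
      · unfold hh
        refine continuousOn_const.mul (ContinuousOn.sub (ContinuousOn.neg
          (ContinuousOn.log (by fun_prop) fun x hx => ?_)) (by fun_prop))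
        have hxm : x ^ m < 1 := pow_lt_one₀ hx.1 (hx.2.trans_lt rlt) (by omega)
        linarith
    · rw [Real.norm_eq_abs, abs_of_nonneg (hbound x hx m).1]
      exact (hbound x hx m).2
  have Hsum : ∀ x ∈ Set.Icc 0 r, Summable fun m => (t m : ℝ) * hh (x ^ m) := fun x hx =>
    Summable.of_nonneg_of_le (fun m => (hbound x hx m).1) (fun m => (hbound x hx m).2)
      (ρsum.mul_right _)
  have HN : ∀ x ∈ Set.Icc 0 r, ∀ N, ∑ m ∈ Finset.range N, (t m : ℝ) * hh (x ^ m) ≤ H x :=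
    fun x hx N => (Hsum x hx).sum_le_tsum _ (fun m _ => (hbound x hx m).1)
  have ρIcc : ρ ∈ Set.Icc 0 r := ⟨ρpos.le, ρr.le⟩
  -- inequality at the radius
  have atρ : Real.exp (τ + H ρ) ≤ 1 - ρ + 2 * τ := by
    have hp := h1 ρ τ ρpos ρlt (fun N => ρsum.sum_le_tsum _ (fun i _ => by positivity))
    have hl : Filter.Tendsto (fun N => Real.exp (∑ m ∈ Finset.range (N + 1), (t m : ℝ) * ρ ^ m +
        ∑ m ∈ Finset.range (N + 1), (t m : ℝ) * hh (ρ ^ m))) Filter.atTop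
        (nhds (Real.exp (τ + H ρ))) := by
      refine (Real.continuous_exp.tendsto _).comp (Filter.Tendsto.add ?_ ?_)
      · exact (ρsum.hasSum.tendsto_sum_nat).comp (Filter.tendsto_add_atTop_nat 1)
      · exact ((Hsum ρ ρIcc).hasSum.tendsto_sum_nat).comp (Filter.tendsto_add_atTop_nat 1)
    refine le_of_tendsto' hl fun N => ?_
    rw [← prod_eq_exp t t0 ρpos ρlt]
    exact hp N
  -- choose R
  obtain ⟨R, hRρ, hRr, hR1, hR2⟩ : ∃ R, ρ < R ∧ R < r ∧
      R - R ^ k + Real.exp (τ + H R) - 1 - τ < τ ∧ T k R - (t k) * R ^ k < τ := by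
    have c1 : Filter.Tendsto (fun R => R - R ^ k + Real.exp (τ + H R) - 1 - τ)
        (nhdsWithin ρ (Set.Ioo ρ r)) (nhds (ρ - ρ ^ k + Real.exp (τ + H ρ) - 1 - τ)) := by
      have cH : Filter.Tendsto H (nhdsWithin ρ (Set.Ioo ρ r)) (nhds (H ρ)) :=
        (Hcont ρ ρIcc).mono_left (nhdsWithin_mono _ fun x hx => ⟨ρpos.le.trans hx.1.le, hx.2.le⟩)
      have cid : Filter.Tendsto (fun R : ℝ => R) (nhdsWithin ρ (Set.Ioo ρ r)) (nhds ρ) :=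
        Filter.tendsto_id.mono_left nhdsWithin_le_nhds
      exact (((cid.sub (cid.pow k)).add ((Real.continuous_exp.tendsto _).comp
        (cH.const_add τ))).sub_const 1).sub_const τ
    have c2 : Filter.Tendsto (fun R => T k R - (t k) * R ^ k)
        (nhdsWithin ρ (Set.Ioo ρ r)) (nhds (T k ρ - (t k) * ρ ^ k)) := by
      have : Continuous (fun R => T k R - (t k) * R ^ k) := (Tcont k).sub (by fun_prop)
      exact (this.tendsto ρ).mono_left nhdsWithin_le_nhds
    have l1 : ρ - ρ ^ k + Real.exp (τ + H ρ) - 1 - τ < τ := by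
      have : 0 < ρ ^ k := by positivity
      linarith
    have l2 : T k ρ - (t k) * ρ ^ k < τ := by
      have h6 : T k ρ ≤ τ := ρsum.sum_le_tsum _ (fun i _ => by positivity)
      have h7 : (0 : ℝ) < t k := by exact_mod_cast tpos k hk
      have : 0 < (t k : ℝ) * ρ ^ k := by positivity
      linarith
    have hne : (nhdsWithin ρ (Set.Ioo ρ r)).NeBot := left_nhdsWithin_Ioo_neBot ρr
    have ev := (c1.eventually_lt_const l1).and ((c2.eventually_lt_const l2).and
      self_mem_nhdsWithin)
    obtain ⟨R, e1, e2, e3⟩ := ev.exists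
    exact ⟨R, e3.1, e3.2, e1, e2⟩
  have Rpos : 0 < R := ρpos.trans hRρ
  have Rlt : R < 1 := hRr.trans rlt
  have RIcc : R ∈ Set.Icc 0 r := ⟨Rpos.le, hRr.le⟩
  -- the bound for `b`
  have Bbound : ∀ N, ∑ m ∈ Finset.range (N + 1), (b m : ℝ) * R ^ m ≤ τ := by
    intro N
    induction N with
    | zero => simpa [b0] using τ0
    | succ N ih =>
      by_cases hN : k ≤ N + 1
      · refine (h2 R N Rpos Rlt hN).trans ?_
        rw [prod_eq_exp b b0 Rpos Rlt]
        set s := ∑ m ∈ Finset.range (N + 1), (b m : ℝ) * R ^ m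
        have hs0 : 0 ≤ s := Finset.sum_nonneg fun i _ => by positivity
        have hH0 : 0 ≤ H R := tsum_nonneg fun m => (hbound R RIcc m).1
        have hHb : ∑ m ∈ Finset.range (N + 1), (b m : ℝ) * hh (R ^ m) ≤ H R := by
          refine le_trans (Finset.sum_le_sum fun m _ => ?_) (HN R RIcc (N + 1))
          rcases Nat.eq_zero_or_pos m with rfl | hm
          · simp [t0, b0]
          · exact mul_le_mul_of_nonneg_right (by exact_mod_cast hbt m)
              (hh_nonneg (pow_lt_one₀ Rpos.le Rlt (by omega)))
        have e1 := exp_sub_mono hs0 ih hH0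
        have e2 : Real.exp (s + ∑ m ∈ Finset.range (N + 1), (b m : ℝ) * hh (R ^ m)) ≤
          Real.exp (s + H R) := Real.exp_le_exp.mpr (by linarith)
        linarith
      · push Not at hN
        refine le_trans ?_ hR2.le
        simp only [hT]
        rw [Finset.sum_range_succ _ k, add_sub_cancel_right]
        refine le_trans (Finset.sum_le_sum_of_subset_of_nonneg
          (Finset.range_mono (show N + 1 + 1 ≤ k by omega)) fun i _ _ => by positivity) ?_
        exact Finset.sum_le_sum fun m _ => mul_le_mul_of_nonneg_right (by exact_mod_cast hbt m)
          (by positivity)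
  have Bterm : ∀ n, (b n : ℝ) * R ^ n ≤ τ := by
    intro n
    refine le_trans ?_ (Bbound n)
    exact Finset.single_le_sum (f := fun m => (b m : ℝ) * R ^ m) (fun i _ => by positivity)
      (Finset.mem_range.mpr (Nat.lt_succ_self n))
  -- the lower bound for `t`
  obtain ⟨Q, hQρ, hQR⟩ := exists_between hRρ
  have Qpos : 0 < Q := ρpos.trans hQρ
  obtain ⟨m, hm1, hm⟩ := beyond Q hQρ (hQR.trans Rlt)
  obtain ⟨δ, δpos, hδ⟩ : ∃ δ : ℝ, 0 < δ ∧ ∀ n, 1 ≤ n → δ ≤ (t n : ℝ) * Q ^ n := by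
    have tp : ∀ n, 1 ≤ n → 0 < (t n : ℝ) * Q ^ n := fun n hn => by
      have : (0 : ℝ) < t n := by exact_mod_cast tpos n hn
      positivity
    obtain ⟨n0, hn0, hmin⟩ := Finset.exists_min_image (Finset.Icc 1 (2 * m))
      (fun n => (t n : ℝ) * Q ^ n) ⟨1, by simp; omega⟩
    refine ⟨(t n0 : ℝ) * Q ^ n0, tp n0 (Finset.mem_Icc.mp hn0).1, ?_⟩
    intro n
    induction n using Nat.strong_induction_on with
    | _ n ih =>
      intro hn
      by_cases hle : n ≤ 2 * m
      · exact hmin n (Finset.mem_Icc.mpr ⟨hn, hle⟩)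
      · push Not at hle
        have i1 := ih (n - m) (by omega) (by omega)
        have i2 : ((t m * t (n - m) : ℕ) : ℝ) ≤ t n := by
          have := hsup m (n - m) hm1 (by omega)
          rw [show m + (n - m) = n by omega] at this
          exact_mod_cast this
        push_cast at i2
        have i3 : Q ^ n = Q ^ m * Q ^ (n - m) := by rw [← pow_add]; congr 1; omega
        have i4 := tp (n - m) (by omega)
        calc _ ≤ (t (n - m) : ℝ) * Q ^ (n - m) := i1
          _ ≤ ((t m : ℝ) * Q ^ m) * ((t (n - m) : ℝ) * Q ^ (n - m)) := by nlinarith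
          _ = ((t m : ℝ) * t (n - m)) * Q ^ n := by rw [i3]; ring
          _ ≤ t n * Q ^ n := mul_le_mul_of_nonneg_right i2 (by positivity)
  -- conclusion
  have hgeo : Filter.Tendsto (fun n => τ / δ * (Q / R) ^ n) Filter.atTop (nhds 0) := by
    have := (tendsto_pow_atTop_nhds_zero_of_lt_one (r := Q / R) (by positivity)
      ((div_lt_one Rpos).mpr hQR)).const_mul (τ / δ)
    simpa using this
  refine tendsto_of_tendsto_of_tendsto_of_le_of_le' tendsto_const_nhds hgeo
    (Filter.Eventually.of_forall fun n => by positivity) ?_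
  filter_upwards [Filter.eventually_ge_atTop 1] with n hn
  have i1 := Bterm n
  have i2 := hδ n hn
  have i3 : (0 : ℝ) < t n := by exact_mod_cast tpos n hn
  rw [div_pow, div_mul_div_comm, div_le_div_iff₀ i3 (by positivity)]
  have hb0 : (0 : ℝ) ≤ b n := Nat.cast_nonneg _
  calc (b n : ℝ) * (δ * R ^ n) = (b n * R ^ n) * δ := by ring
    _ ≤ τ * δ := mul_le_mul_of_nonneg_right i1 δpos.le
    _ ≤ τ * ((t n : ℝ) * Q ^ n) := mul_le_mul_of_nonneg_left i2 τ0
    _ = _ := by ring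

end Analytic


lemma not_cograph_of_path {V : Type} {G : SimpleGraph V} {a b c d : V}
    (hab : G.Adj a b) (hbc : G.Adj b c) (hcd : G.Adj c d)
    (hac : ¬ G.Adj a c) (had : ¬ G.Adj a d) (hbd : ¬ G.Adj b d) : ¬ IsCograph G := by
  intro h
  have nab := hab.ne
  have nbc := hbc.ne
  have ncd := hcd.ne
  have nac : a ≠ c := by rintro rfl; exact had hcd
  have nbd : b ≠ d := by rintro rfl; exact had hab
  have nad : a ≠ d := by rintro rfl; exact hac hcd.symm
  apply h
  refine ⟨⟨![a, b, c, d], ?_⟩, ?_⟩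
  · intro i j hij
    fin_cases i <;> fin_cases j <;> simp_all
  · intro i j
    rw [SimpleGraph.pathGraph_adj]
    change G.Adj (![a, b, c, d] i) (![a, b, c, d] j) ↔ _
    fin_cases i <;> fin_cases j <;> simp_all [G.adj_comm]

/-- The vertex set `s` splits into two parts without edges between them. -/
def HasCut {V : Type} [DecidableEq V] (G : SimpleGraph V) (s : Finset V) : Prop :=
  ∃ U ⊆ s, U.Nonempty ∧ (s \ U).Nonempty ∧ ∀ u ∈ U, ∀ w ∈ s \ U, ¬ G.Adj u w

lemma HasCut.flip {V : Type} [DecidableEq V] {G : SimpleGraph V} {s U : Finset V}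
    (hU : U ⊆ s) (h1 : U.Nonempty) (h2 : (s \ U).Nonempty)
    (h : ∀ u ∈ U, ∀ w ∈ s \ U, ¬ G.Adj u w) :
    s \ U ⊆ s ∧ (s \ U).Nonempty ∧ (s \ (s \ U)).Nonempty ∧
      ∀ u ∈ s \ U, ∀ w ∈ s \ (s \ U), ¬ G.Adj u w := by
  have e : s \ (s \ U) = U := by 
    ext a
    have := @hU a
    simp only [Finset.mem_sdiff]
    tauto
  rw [e]
  exact ⟨Finset.sdiff_subset, h2, h1, fun u hu w hw hh => h w hw u hu hh.symm⟩

lemma cut_step {V : Type} [DecidableEq V] {G : SimpleGraph V} (hG : IsCograph G)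
    {v : V} {s : Finset V} (hv : v ∉ s) (hs : s.Nonempty) (h : HasCut G s) :
    HasCut G (insert v s) ∨ HasCut Gᶜ (insert v s) := by
  by_contra hcon
  push Not at hcon
  obtain ⟨n1, n2⟩ := hcon
  have hw : ∃ w ∈ s, ¬ G.Adj v w := by
    by_contra hh
    push Not at hh
    refine n2 ⟨{v}, by simp, by simp, ?_, ?_⟩
    · obtain ⟨a, ha⟩ := hs
      exact ⟨a, by simp; exact ⟨Or.inr ha, fun e => hv (e ▸ ha)⟩⟩
    · intro u hu w hw
      simp at hu hw
      subst hu
      rcases hw.1 with h1 | h1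
      · exact absurd h1 hw.2
      · rw [compl_adj]; intro h2; exact h2.2 (hh w h1)
  obtain ⟨w, hws, hvw⟩ := hw
  have key : ∃ U ⊆ s, w ∈ U ∧ (s \ U).Nonempty ∧ ∀ u ∈ U, ∀ w ∈ s \ U, ¬ G.Adj u w := by
    obtain ⟨U, hU, h1, h2, h3⟩ := h
    by_cases hwU : w ∈ U
    · exact ⟨U, hU, hwU, h2, h3⟩
    · obtain ⟨k1, k2, k3, k4⟩ := HasCut.flip hU h1 h2 h3
      exact ⟨s \ U, k1, by simp [hws, hwU], k3, k4⟩
  obtain ⟨U, hU, hwU, h2, h3⟩ := key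
  have hx : ∃ y ∈ U, ∃ x ∈ U, ¬ G.Adj v y ∧ G.Adj v x ∧ G.Adj y x := by
    by_contra hh
    push Not at hh
    classical
    refine n1 ⟨U.filter (fun y => ¬ G.Adj v y), ?_, ⟨w, by simp [hwU, hvw]⟩, ⟨v, ?_⟩, ?_⟩
    · intro a ha; simp at ha; simp [hU ha.1]
    · simp
      intro h; exact absurd (hU h) hv
    · intro y hy x hx hyx
      simp at hy hx
      rcases hx.1 with rfl | hxs
      · exact hy.2 hyx.symm
      · by_cases hxU : x ∈ U
        · exact hh y hy.1 x hxU hy.2 (hx.2 hxU) hyx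
        · exact h3 y hy.1 x (by simp [hxs, hxU]) hyx
  have hz : ∃ z ∈ s \ U, G.Adj v z := by
    by_contra hh
    push Not at hh
    refine n1 ⟨s \ U, ?_, h2, ⟨v, by simp [hv]⟩, ?_⟩
    · intro a ha; simp at ha; simp [ha.1]
    · intro y hy x hx hyx
      simp only [Finset.mem_sdiff, Finset.mem_insert] at hx
      rcases hx.1 with rfl | hxs
      · exact hh y hy hyx.symm
      · have : x ∈ U := by
          by_contra hxU; exact hx.2 ⟨hxs, hxU⟩
        exact h3 x this y hy hyx.symm
  obtain ⟨y, hy, x, hx, a1, a2, a3⟩ := hx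
  obtain ⟨z, hz, b1⟩ := hz
  exact not_cograph_of_path b1.symm a2 a3.symm (fun h => h3 x hx z hz h.symm)
    (fun h => h3 y hy z hz h.symm) a1 hG

lemma cograph_cut {V : Type} [DecidableEq V] {G : SimpleGraph V} (hG : IsCograph G)
    (s : Finset V) (hs : 2 ≤ s.card) : HasCut G s ∨ HasCut Gᶜ s := by
  induction s using Finset.induction_on with
  | empty => simp at hs
  | insert v s hv ih =>
    rw [Finset.card_insert_of_notMem hv] at hs
    have hne : s.Nonempty := by rw [← Finset.card_pos]; omega
    by_cases h1 : s.card = 1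
    · obtain ⟨a, rfl⟩ := Finset.card_eq_one.1 h1
      have hva : v ≠ a := by simpa using hv
      by_cases hadj : G.Adj v a
      · right
        refine ⟨{v}, by simp, by simp, ⟨a, by simp [hva.symm]⟩, ?_⟩
        intro u hu w hw
        simp at hu hw
        obtain rfl := hu
        rcases hw.1 with h | h
        · exact absurd h hw.2
        · subst h; simp [hadj]
      · left
        refine ⟨{v}, by simp, by simp, ⟨a, by simp [hva.symm]⟩, ?_⟩
        intro u hu w hw
        simp at hu hw
        obtain rfl := hu
        rcases hw.1 with h | h
        · exact absurd h hw.2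
        · subst h; simp [hadj]
    · rcases ih (by omega) with h | h
      · exact cut_step hG hv hne h
      · have := cut_step (isCograph_compl hG) hv hne h
        rw [compl_compl] at this
        exact this.symm

lemma not_connected_of_cut {V : Type} [Fintype V] [DecidableEq V] {G : SimpleGraph V}
    (h : HasCut G Finset.univ) : ¬ G.Connected := by
  intro hc
  obtain ⟨U, -, ⟨a, ha⟩, ⟨b, hb⟩, h3⟩ := h
  obtain ⟨p⟩ := hc.preconnected a b
  obtain ⟨d, -, h1, h2⟩ := p.exists_boundary_dart (U : Set V) (by simpa using ha) (by simpa using hb)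
  exact h3 _ (by simpa using h1) _ (by simpa using h2) d.adj

lemma cograph_not_connected_compl {V : Type} [Finite V] {G : SimpleGraph V} (hG : IsCograph G)
    (hV : 2 ≤ Nat.card V) (hc : G.Connected) : ¬ Gᶜ.Connected := by
  classical
  have := Fintype.ofFinite V
  rw [Nat.card_eq_fintype_card] at hV
  rcases cograph_cut hG Finset.univ (by simpa using hV) with h | h
  · exact absurd hc (not_connected_of_cut h)
  · exact not_connected_of_cut h


/-- Isomorphism of finite graphs on initial segments of `ℕ`. -/
def gSetoid : Setoid (Σ n : ℕ, SimpleGraph (Fin n)) where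
  r a b := Nonempty (a.2 ≃g b.2)
  iseqv := ⟨fun _ => ⟨Iso.refl⟩, fun ⟨e⟩ => ⟨e.symm⟩, fun ⟨e⟩ ⟨f⟩ => ⟨e.trans f⟩⟩

/-- Isomorphism classes of finite graphs. -/
def Cls : Type := Quotient gSetoid

/-- The class of a finite graph. -/
noncomputable def cls {V : Type} [Finite V] (G : SimpleGraph V) : Cls :=
  Quotient.mk gSetoid ⟨Nat.card V, G.comap (Finite.equivFin V).symm⟩

/-- The number of vertices. -/
noncomputable def csize (c : Cls) : ℕ := (Quotient.out c).1

/-- A representative. -/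
noncomputable def rep (c : Cls) : SimpleGraph (Fin (csize c)) := (Quotient.out c).2

lemma cls_eq_iff {V W : Type} [Finite V] [Finite W] {G : SimpleGraph V} {H : SimpleGraph W} :
    cls G = cls H ↔ Nonempty (G ≃g H) := by
  unfold cls
  refine Iff.trans (Quotient.eq (r := gSetoid)) ?_
  let e : G.comap (Finite.equivFin V).symm ≃g G := Iso.comap (Finite.equivFin V).symm G
  let f : H.comap (Finite.equivFin W).symm ≃g H := Iso.comap (Finite.equivFin W).symm H
  constructor
  · rintro ⟨a⟩
    exact ⟨(e.symm.trans a).trans f⟩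
  · rintro ⟨a⟩
    exact ⟨(e.trans a).trans f.symm⟩

lemma cls_rep (c : Cls) : cls (rep c) = c := by
  conv_rhs => rw [← Quotient.out_eq c]
  unfold cls
  apply Quotient.sound
  exact ⟨Iso.comap (Finite.equivFin _).symm (rep c)⟩

lemma rep_cls_iso {V : Type} [Finite V] (G : SimpleGraph V) : Nonempty (rep (cls G) ≃g G) :=
  cls_eq_iff.1 (cls_rep _)

lemma csize_cls {V : Type} [Finite V] (G : SimpleGraph V) : csize (cls G) = Nat.card V := by
  obtain ⟨e⟩ := rep_cls_iso G
  rw [← Nat.card_congr e.toEquiv, Nat.card_eq_fintype_card, Fintype.card_fin]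

lemma exists_rep_of_size {c : Cls} {n : ℕ} (h : csize c = n) :
    ∃ G : SimpleGraph (Fin n), cls G = c := by
  subst h
  exact ⟨rep c, cls_rep c⟩

lemma finite_csize (n : ℕ) : {c : Cls | csize c = n}.Finite := by
  apply (Set.finite_range (fun G : SimpleGraph (Fin n) => cls G)).subset
  intro c hc
  obtain ⟨G, hG⟩ := exists_rep_of_size hc
  exact ⟨G, hG⟩

lemma finite_csize_le (n : ℕ) : {c : Cls | csize c ≤ n}.Finite := by
  have : {c : Cls | csize c ≤ n} = ⋃ m ∈ Finset.range (n + 1), {c : Cls | csize c = m} := by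
    ext c; simp
  rw [this]
  exact (Finset.range (n + 1)).finite_toSet.biUnion (fun m _ => finite_csize m)

/-- The complement class. -/
noncomputable def ccompl (c : Cls) : Cls := cls (rep c)ᶜ

/-- Complements of isomorphic graphs are isomorphic. -/
def isoCompl {V W : Type} {G : SimpleGraph V} {H : SimpleGraph W} (e : G ≃g H) : Gᶜ ≃g Hᶜ where
  toEquiv := e.toEquiv
  map_rel_iff' := by
    intro a b
    have := e.map_rel_iff' (a := a) (b := b)
    simp only [compl_adj, this, ne_eq, EmbeddingLike.apply_eq_iff_eq]

lemma ccompl_cls {V : Type} [Finite V] (G : SimpleGraph V) : ccompl (cls G) = cls Gᶜ := by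
  obtain ⟨e⟩ := rep_cls_iso G
  exact cls_eq_iff.2 ⟨isoCompl e⟩

lemma ccompl_ccompl (c : Cls) : ccompl (ccompl c) = c := by
  conv_lhs => rw [← cls_rep c]
  rw [ccompl_cls, ccompl_cls, compl_compl, cls_rep]

lemma ccompl_inj : Function.Injective ccompl :=
  Function.LeftInverse.injective ccompl_ccompl

lemma csize_ccompl (c : Cls) : csize (ccompl c) = csize c := by
  unfold ccompl
  rw [csize_cls, Nat.card_eq_fintype_card, Fintype.card_fin]

lemma classCount_eq (n : ℕ) (P : SimpleGraph (Fin n) → Prop) :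
    classCount n P = Set.ncard {c : Cls | ∃ G : SimpleGraph (Fin n), P G ∧ cls G = c} := by
  unfold classCount
  let f : (Quot fun G H : {G : SimpleGraph (Fin n) // P G} => Nonempty (G.1 ≃g H.1)) → Cls :=
    Quot.lift (fun G => cls G.1) (fun G H h => cls_eq_iff.2 h)
  have hf : Function.Injective f := by
    rintro ⟨a⟩ ⟨b⟩ h
    exact Quot.sound (cls_eq_iff.1 h)
  have hr : {c : Cls | ∃ G : SimpleGraph (Fin n), P G ∧ cls G = c} = Set.range f := by
    ext c
    constructor
    · rintro ⟨G, hG, rfl⟩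
      exact ⟨Quot.mk _ ⟨G, hG⟩, rfl⟩
    · rintro ⟨⟨G⟩, rfl⟩
      exact ⟨G.1, G.2, rfl⟩
  rw [hr, ← Set.image_univ, Set.ncard_image_of_injective _ hf, Set.ncard_univ]

/-- Connected classes. -/
def CCon (c : Cls) : Prop := (rep c).Connected
/-- Classes of cographs. -/
def CCog (c : Cls) : Prop := IsCograph (rep c)

lemma ccon_cls {V : Type} [Finite V] (G : SimpleGraph V) : CCon (cls G) ↔ G.Connected := by
  obtain ⟨e⟩ := rep_cls_iso G
  exact e.connected_iff

lemma ccog_cls {V : Type} [Finite V] (G : SimpleGraph V) : CCog (cls G) ↔ IsCograph G := by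
  obtain ⟨e⟩ := rep_cls_iso G
  exact ⟨IsCograph.iso e, IsCograph.iso e.symm⟩

lemma ccog_ccompl {c : Cls} (h : CCog c) : CCog (ccompl c) :=
  (ccog_cls _).2 (isCograph_compl h)

lemma not_ccon_ccompl {c : Cls} (h : CCog c) (h2 : 2 ≤ csize c) (hc : CCon c) :
    ¬ CCon (ccompl c) := by
  unfold ccompl
  rw [ccon_cls]
  exact cograph_not_connected_compl h (by simpa using h2) hc

lemma ccon_or_ccompl {c : Cls} (h : 1 ≤ csize c) : CCon c ∨ CCon (ccompl c) := by
  unfold ccompl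
  rw [ccon_cls]
  have : Nonempty (Fin (csize c)) := ⟨⟨0, h⟩⟩
  exact connected_or_connected_compl _

lemma CCon.size_pos {c : Cls} (h : CCon c) : 1 ≤ csize c := by
  obtain ⟨a⟩ := h.nonempty
  exact (Nat.zero_le _).trans_lt a.2

lemma csize_zero_unique {c d : Cls} (h : csize c = 0) (h' : csize d = 0) : c = d := by
  obtain ⟨G, rfl⟩ := exists_rep_of_size h
  obtain ⟨H, rfl⟩ := exists_rep_of_size h'
  congr 1
  ext a; exact a.elim0

lemma csize_one_unique {c d : Cls} (h : csize c = 1) (h' : csize d = 1) : c = d := by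
  obtain ⟨G, rfl⟩ := exists_rep_of_size h
  obtain ⟨H, rfl⟩ := exists_rep_of_size h'
  congr 1
  ext a b
  have : a = b := Subsingleton.elim _ _
  subst this
  simp

lemma IsCograph.of_card {V : Type} [Fintype V] (G : SimpleGraph V) (h : Fintype.card V ≤ 3) :
    IsCograph G := by
  rintro ⟨f, -⟩
  have := Fintype.card_le_of_embedding f
  simp at this
  omega


/-- The multiset of classes of connected components. -/
noncomputable def compsG {V : Type} [Finite V] (G : SimpleGraph V) : Multiset Cls :=
  letI := Fintype.ofFinite G.ConnectedComponent
  (Finset.univ : Finset G.ConnectedComponent).val.map (fun C => cls (G.induce C.supp))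

lemma compsG_eq_of_fibres {V ι : Type} [Finite V] [Fintype ι] (G : SimpleGraph V) (p : V → ι)
    (hp : ∀ u v, G.Adj u v → p u = p v) (x : ι → Cls)
    (hc : ∀ i, (G.induce {v | p v = i}).Connected)
    (hx : ∀ i, cls (G.induce {v | p v = i}) = x i) :
    compsG G = (Finset.univ : Finset ι).val.map x := by
  let _ := Fintype.ofFinite G.ConnectedComponent
  have h1 : ∀ u v, G.Reachable u v → p u = p v := by
    rintro u v ⟨w⟩
    induction w with
    | nil => rfl
    | cons h _ ih => exact (hp _ _ h).trans ih
  have h2 : ∀ u v, p u = p v → G.Reachable u v := by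
    intro u v h
    have := (hc (p v)).preconnected ⟨u, h⟩ ⟨v, rfl⟩
    exact this.map (Embedding.induce _).toHom
  let f : G.ConnectedComponent → ι := fun C => C.lift p (fun u v w _ => h1 u v ⟨w⟩)
  have hf : ∀ v, f (G.connectedComponentMk v) = p v := fun v => rfl
  have hbij : Function.Bijective f := by
    constructor
    · intro C D
      induction C using ConnectedComponent.ind with | _ u
      induction D using ConnectedComponent.ind with | _ v
      intro h
      exact ConnectedComponent.sound (h2 u v h)
    · intro i
      obtain ⟨⟨v, hv⟩⟩ := (hc i).nonempty
      exact ⟨G.connectedComponentMk v, hv⟩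
  have hcl : ∀ C : G.ConnectedComponent, cls (G.induce C.supp) = x (f C) := by
    intro C
    rw [← hx]
    have : C.supp = {v | p v = f C} := by
      ext v
      rw [ConnectedComponent.mem_supp_iff]
      constructor
      · rintro rfl; rfl
      · intro h; exact hbij.1 h
    rw [this]
  have e := Equiv.ofBijective f hbij
  unfold compsG
  simp only [hcl]
  rw [← Function.comp_def, ← Multiset.map_map]
  congr 1
  have := Finset.map_univ_equiv (Equiv.ofBijective f hbij)
  have h3 := congrArg Finset.val this
  rw [Finset.map_val] at h3
  exact h3

lemma mem_compsG {V : Type} [Finite V] {G : SimpleGraph V} {x : Cls} :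
    x ∈ compsG G ↔ ∃ C : G.ConnectedComponent, cls (G.induce C.supp) = x := by
  unfold compsG; simp

lemma compsG_iso {V W : Type} [Finite V] [Finite W] {G : SimpleGraph V} {H : SimpleGraph W}
    (e : G ≃g H) : compsG G = compsG H := by
  let _ := Fintype.ofFinite H.ConnectedComponent
  have key : ∀ C : H.ConnectedComponent,
      Nonempty (G.induce {v | H.connectedComponentMk (e v) = C} ≃g H.induce C.supp) := by
    intro C
    refine ⟨⟨e.toEquiv.subtypeEquiv (fun a => Iff.rfl), ?_⟩⟩
    intro a b
    exact e.map_rel_iff'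
  refine compsG_eq_of_fibres G (fun v => H.connectedComponentMk (e v)) ?_ _ ?_ ?_
  · intro u v h
    exact ConnectedComponent.sound ((e.map_rel_iff'.2 h : H.Adj (e u) (e v)).reachable)
  · intro C
    obtain ⟨f⟩ := key C
    exact f.connected_iff.2 C.connected_toSimpleGraph
  · intro C
    exact cls_eq_iff.2 (key C)

/-- Components of a class. -/
noncomputable def comps (c : Cls) : Multiset Cls := compsG (rep c)

lemma comps_cls {V : Type} [Finite V] (G : SimpleGraph V) : comps (cls G) = compsG G := by
  obtain ⟨e⟩ := rep_cls_iso G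
  exact compsG_iso e

lemma exists_equiv_of_map_eq {α β γ : Type} [Fintype α] [Fintype β] (f : α → γ) (g : β → γ)
    (h : (Finset.univ : Finset α).val.map f = (Finset.univ : Finset β).val.map g) :
    ∃ σ : α ≃ β, ∀ a, g (σ a) = f a := by
  classical
  have key : ∀ c, Nonempty ({a // f a = c} ≃ {b // g b = c}) := by
    intro c
    rw [← Fintype.card_eq]
    have := congrArg (Multiset.count c) h
    rw [Multiset.count_map, Multiset.count_map] at this
    rw [Fintype.card_subtype, Fintype.card_subtype]
    simp only [Finset.card_def, Finset.filter_val]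
    simpa only [eq_comm] using this
  have e := fun c => (key c).some
  exact ⟨Equiv.ofFiberEquiv e, Equiv.ofFiberEquiv_map e⟩

lemma compsG_inj {V W : Type} [Finite V] [Finite W] {G : SimpleGraph V} {H : SimpleGraph W}
    (h : compsG G = compsG H) : Nonempty (G ≃g H) := by
  let _ := Fintype.ofFinite G.ConnectedComponent
  let _ := Fintype.ofFinite H.ConnectedComponent
  obtain ⟨σ, hσ⟩ := exists_equiv_of_map_eq _ _ h
  have φ := fun C => (cls_eq_iff.1 (hσ C).symm :
    Nonempty (G.induce C.supp ≃g H.induce (σ C).supp)).some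
  let F : V ≃ W := (Equiv.sigmaFiberEquiv G.connectedComponentMk).symm.trans
    ((Equiv.sigmaCongr σ (fun C => (φ C).toEquiv)).trans
      (Equiv.sigmaFiberEquiv H.connectedComponentMk))
  have hF : ∀ (C : G.ConnectedComponent) (u : C.supp), F u.1 = (φ C u).1 := by
    rintro C ⟨u, rfl⟩
    rfl
  have hmk : ∀ u, H.connectedComponentMk (F u) = σ (G.connectedComponentMk u) := by
    intro u
    rw [hF (G.connectedComponentMk u) ⟨u, rfl⟩]
    exact (φ _ _).2
  refine ⟨⟨F, ?_⟩⟩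
  intro u v
  by_cases huv : G.connectedComponentMk u = G.connectedComponentMk v
  · rw [hF (G.connectedComponentMk v) ⟨u, huv⟩, hF (G.connectedComponentMk v) ⟨v, rfl⟩]
    exact (φ (G.connectedComponentMk v)).map_rel_iff' (a := ⟨u, huv⟩) (b := ⟨v, rfl⟩)
  · constructor
    · intro h
      have := ConnectedComponent.sound h.reachable
      rw [hmk, hmk] at this
      exact absurd (σ.injective this) huv
    · intro h
      exact absurd (ConnectedComponent.sound h.reachable) huv

lemma comps_inj : Function.Injective comps := by
  intro c d h
  rw [← cls_rep c, ← cls_rep d]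
  exact cls_eq_iff.2 (compsG_inj h)

lemma ccon_of_mem {c x : Cls} (h : x ∈ comps c) : CCon x := by
  obtain ⟨C, rfl⟩ := mem_compsG.1 h
  exact (ccon_cls _).2 C.connected_toSimpleGraph

lemma comps_of_con {c : Cls} (h : CCon c) : comps c = {c} := by
  have e : Nonempty ((rep c).induce {v | (fun _ => () : _ → Unit) v = ()} ≃g rep c) := by
    refine ⟨⟨Equiv.subtypeUnivEquiv (fun _ => rfl), ?_⟩⟩
    intro a b
    rfl
  have := compsG_eq_of_fibres (rep c) (fun _ => ()) (fun _ _ _ => rfl) (fun _ => c) ?_ ?_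
  · unfold comps
    rw [this]
    rfl
  · intro i
    obtain ⟨e⟩ := e
    exact e.connected_iff.2 h
  · intro i
    conv_rhs => rw [← cls_rep c]
    exact cls_eq_iff.2 e

lemma ccon_of_comps_eq {c x : Cls} (h : comps c = {x}) : CCon c := by
  have hx : CCon x := ccon_of_mem (c := c) (by rw [h]; simp)
  have : c = x := comps_inj (by rw [h, comps_of_con hx])
  rwa [this]

lemma csize_eq_sum (c : Cls) : csize c = ((comps c).map csize).sum := by
  let _ := Fintype.ofFinite (rep c).ConnectedComponent
  have h1 : csize c = Nat.card (Fin (csize c)) := by simp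
  rw [h1, Nat.card_congr (Equiv.sigmaFiberEquiv (rep c).connectedComponentMk).symm, Nat.card_sigma]
  unfold comps compsG
  rw [Multiset.map_map, Finset.sum_eq_multiset_sum]
  congr 1
  apply Multiset.map_congr rfl
  intro C _
  simp only [Function.comp]
  rw [csize_cls]
  rfl

lemma comps_surj (M : Multiset Cls) (hM : ∀ x ∈ M, CCon x) : ∃ c, comps c = M := by
  induction M using Quot.inductionOn with | _ l
  change ∀ x ∈ (l : Multiset Cls), CCon x at hM
  change ∃ c, comps c = (l : Multiset Cls)
  let x : Fin l.length → Cls := fun i => l.get i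
  let V := Σ i : Fin l.length, Fin (csize (x i))
  let G : SimpleGraph V :=
    { Adj := fun a b => ∃ i u v, a = ⟨i, u⟩ ∧ b = ⟨i, v⟩ ∧ (rep (x i)).Adj u v
      symm := ⟨by
        rintro a b ⟨i, u, v, h1, h2, h3⟩
        exact ⟨i, v, u, h2, h1, h3.symm⟩⟩
      loopless := ⟨by
        rintro a ⟨i, u, v, rfl, h2, h3⟩
        cases h2
        exact h3.ne rfl⟩ }
  have key : ∀ i, Nonempty (rep (x i) ≃g G.induce {v : V | v.1 = i}) := by
    intro i
    refine ⟨⟨(Equiv.sigmaSubtype (β := fun i => Fin (csize (x i))) i).symm, ?_⟩⟩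
    intro a b
    constructor
    · rintro ⟨j, u, v, h1, h2, h3⟩
      cases h1
      cases h2
      exact h3
    · intro h
      exact ⟨i, a, b, rfl, rfl, h⟩
  refine ⟨cls G, ?_⟩
  rw [comps_cls, compsG_eq_of_fibres G (fun v => v.1) ?_ x ?_ ?_]
  · rw [Fin.univ_val_map]
    simp [x]
  · rintro u v ⟨i, a, b, rfl, rfl, -⟩
    rfl
  · intro i
    obtain ⟨e⟩ := key i
    exact e.connected_iff.1 (hM _ (by simp [x]))
  · intro i
    rw [← cls_rep (x i)]
    obtain ⟨e⟩ := key i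
    exact cls_eq_iff.2 ⟨e.symm⟩

lemma ccog_of_mem {c x : Cls} (hc : CCog c) (h : x ∈ comps c) : CCog x := by
  obtain ⟨C, rfl⟩ := mem_compsG.1 h
  rw [ccog_cls]
  rintro ⟨f, hf⟩
  exact hc ⟨f.trans (Function.Embedding.subtype _), hf⟩

lemma ccog_of_comps {c : Cls} (h : ∀ x ∈ comps c, CCog x) : CCog c := by
  rintro ⟨f, hf⟩
  have hall : ∀ i, (rep c).connectedComponentMk (f i) = (rep c).connectedComponentMk (f 0) := by
    have st : ∀ i j : Fin 4, (pathGraph 4).Adj i j →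
        (rep c).connectedComponentMk (f j) = (rep c).connectedComponentMk (f i) := by
      intro i j hij
      exact ConnectedComponent.sound ((hf i j).2 hij).symm.reachable
    have h1 := st 0 1 (by rw [pathGraph_adj]; decide)
    have h2 := st 1 2 (by rw [pathGraph_adj]; decide)
    have h3 := st 2 3 (by rw [pathGraph_adj]; decide)
    intro i
    fin_cases i
    · rfl
    · exact h1
    · exact h2.trans h1
    · exact h3.trans (h2.trans h1)
  have := h _ (mem_compsG.2 ⟨(rep c).connectedComponentMk (f 0), rfl⟩)
  rw [ccog_cls] at this
  exact this ⟨⟨fun i => ⟨f i, hall i⟩, fun i j hij => f.injective (congrArg Subtype.val hij)⟩, hf⟩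

lemma HasMod.of_component {K V : Type} {A : SimpleGraph K} {G : SimpleGraph V}
    (C : G.ConnectedComponent) (h : HasMod A (G.induce C.supp)) : HasMod A G := by
  obtain ⟨f, h1, h2⟩ := h
  refine ⟨f.trans (Function.Embedding.subtype _), h1, ?_⟩
  intro v hv i j
  by_cases hvC : v ∈ C.supp
  · refine h2 ⟨v, hvC⟩ ?_ i j
    rintro ⟨k, hk⟩
    exact hv ⟨k, by simp [hk]⟩
  · have : ∀ k, ¬ G.Adj ((f.trans (Function.Embedding.subtype _)) k) v := by
      intro k hk
      exact hvC ((C.mem_supp_congr_adj hk).1 (f k).2)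
    exact iff_of_false (this i) (this j)

/-- Cographs without the special modules. -/
def IsF {V : Type} (G : SimpleGraph V) : Prop :=
  IsCograph G ∧ ¬ HasMod gA G ∧ ¬ HasMod gAᶜ G

/-- Classes of cographs without the special modules. -/
def CF (c : Cls) : Prop := IsF (rep c)

lemma HasMod.iso {K V W : Type} {A : SimpleGraph K} {G : SimpleGraph V} {H : SimpleGraph W}
    (e : G ≃g H) (h : HasMod A G) : HasMod A H := by
  obtain ⟨f, h1, h2⟩ := h
  refine ⟨f.trans e.toEquiv.toEmbedding, ?_, ?_⟩
  · intro i j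
    exact e.map_rel_iff'.trans (h1 i j)
  · intro v hv i j
    obtain ⟨w, rfl⟩ := e.surjective v
    refine (e.map_rel_iff'.trans (h2 w ?_ i j)).trans e.map_rel_iff'.symm
    rintro ⟨k, hk⟩
    exact hv ⟨k, by rw [← hk]; rfl⟩

lemma IsF.iso {V W : Type} {G : SimpleGraph V} {H : SimpleGraph W}
    (e : G ≃g H) (h : IsF G) : IsF H :=
  ⟨IsCograph.iso e h.1, fun k => h.2.1 (k.iso e.symm), fun k => h.2.2 (k.iso e.symm)⟩

lemma IsF.compl {V : Type} {G : SimpleGraph V} (h : IsF G) : IsF Gᶜ := by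
  refine ⟨isCograph_compl h.1, fun k => h.2.2 ?_, fun k => h.2.1 ?_⟩
  · have := k.compl
    rwa [compl_compl] at this
  · have := k.compl
    rwa [compl_compl, compl_compl] at this

lemma cf_cls {V : Type} [Finite V] (G : SimpleGraph V) : CF (cls G) ↔ IsF G := by
  obtain ⟨e⟩ := rep_cls_iso G
  exact ⟨IsF.iso e, IsF.iso e.symm⟩

lemma cf_ccompl {c : Cls} (h : CF c) : CF (ccompl c) :=
  (cf_cls _).2 (IsF.compl h)

lemma cf_of_mem {c x : Cls} (hc : CF c) (h : x ∈ comps c) : CF x := by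
  refine ⟨ccog_of_mem hc.1 h, ?_⟩
  obtain ⟨C, rfl⟩ := mem_compsG.1 h
  obtain ⟨e⟩ := rep_cls_iso ((rep c).induce C.supp)
  exact ⟨fun k => hc.2.1 ((k.iso e).of_component), fun k => hc.2.2 ((k.iso e).of_component)⟩

lemma cf_of_small {c : Cls} (hc : CCog c) (h : csize c < 9) : CF c := by
  refine ⟨hc, ?_, ?_⟩ <;>
  · rintro ⟨f, -⟩
    have := Fintype.card_le_of_embedding f
    simp at this
    omega

lemma gA_not_cf : ¬ CF (cls gA) := by
  rw [cf_cls]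
  rintro ⟨-, h, -⟩
  exact h ⟨Function.Embedding.refl _, fun _ _ => Iff.rfl, fun v hv => absurd ⟨v, rfl⟩ hv⟩

lemma csize_gA : csize (cls gA) = 9 := by rw [csize_cls]; simp

/-- Components of nonconnected classes are smaller. -/
lemma csize_lt_of_mem {c x : Cls} (hc : ¬ CCon c) (h : x ∈ comps c) : csize x < csize c := by
  obtain ⟨M, hM⟩ := Multiset.exists_cons_of_mem h
  have h1 := csize_eq_sum c
  rw [hM, Multiset.map_cons, Multiset.sum_cons] at h1
  by_cases h0 : M = 0
  · subst h0
    exact absurd (ccon_of_comps_eq (x := x) hM) hc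
  · obtain ⟨y, hy⟩ := Multiset.exists_mem_of_ne_zero h0
    have h2 : 1 ≤ csize y := (ccon_of_mem (c := c) (by rw [hM]; simp [hy])).size_pos
    have h3 : csize y ≤ (M.map csize).sum :=
      Multiset.single_le_sum (fun _ _ => Nat.zero_le _) _ (Multiset.mem_map_of_mem _ hy)
    omega


set_option maxRecDepth 100000 in
lemma adjA_noP4 : ∀ a b, adjA a b = true → ∀ c, adjA b c = true → adjA a c = false → ∀ d,
    adjA c d = true → adjA a d = false → adjA b d = false → False := by decide

lemma gA_cograph : IsCograph gA := by
  rintro ⟨f, hf⟩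
  have h : ∀ i j, gA.Adj i j ↔ adjA i j = true := fun i j => Iff.rfl
  have h' : ∀ i j : Fin 4, ¬ (pathGraph 4).Adj i j → adjA (f i) (f j) = false := by
    intro i j hij
    rw [← hf, h] at hij
    simpa using hij
  refine adjA_noP4 (f 0) (f 1) ((hf 0 1).2 ?_) (f 2) ((hf 1 2).2 ?_) (h' 0 2 ?_) (f 3)
    ((hf 2 3).2 ?_) (h' 0 3 ?_) (h' 1 3 ?_) <;> rw [pathGraph_adj] <;> decide

lemma gA_cut : HasCut gA Finset.univ := by
  refine ⟨{0, 5, 7}, by simp, by simp, ⟨1, by decide⟩, ?_⟩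
  have h : ∀ i j, gA.Adj i j ↔ adjA i j = true := fun i j => Iff.rfl
  simp only [h]
  decide

lemma gA_not_connected : ¬ CCon (cls gA) := by
  rw [ccon_cls]
  exact not_connected_of_cut gA_cut

/-- Upper bound for sums over multisets. -/
lemma sum_multiset_le {α : Type} [DecidableEq α] (X : Finset α) (w : α → ℕ) (hw : ∀ x ∈ X, 1 ≤ w x)
    {y : ℝ} (hy0 : 0 < y) (hy1 : y < 1) (S : Finset (Multiset α)) (hS : ∀ M ∈ S, ∀ a ∈ M, a ∈ X) :
    ∑ M ∈ S, y ^ ((M.map w).sum) ≤ ∏ x ∈ X, (1 - y ^ (w x))⁻¹ := by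
  induction X using Finset.induction_on generalizing S with
  | empty =>
    have : S ⊆ {0} := by
      intro M hM
      rw [Finset.mem_singleton]
      apply Multiset.eq_zero_of_forall_notMem
      intro a ha
      simpa using hS M hM a ha
    calc _ ≤ ∑ M ∈ ({0} : Finset (Multiset α)), y ^ ((M.map w).sum) :=
          Finset.sum_le_sum_of_subset_of_nonneg this (fun _ _ _ => by positivity)
      _ ≤ _ := by simp
  | insert x X hx ih =>
    rw [Finset.prod_insert hx]
    have hwx : 1 ≤ w x := hw x (by simp)
    set q := y ^ (w x) with hq
    have hq0 : 0 ≤ q := by positivity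
    have hq1 : q < 1 := pow_lt_one₀ hy0.le hy1 (by omega)
    obtain ⟨K, hK⟩ : ∃ K, ∀ M ∈ S, M.count x < K :=
      ⟨S.sup (fun M => M.count x) + 1, fun M hM =>
        Nat.lt_succ_of_le (Finset.le_sup (f := fun M => M.count x) hM)⟩
    have e : ∑ M ∈ S, y ^ ((M.map w).sum) =
        ∑ i ∈ Finset.range K, ∑ M ∈ S.filter (fun M => M.count x = i), y ^ ((M.map w).sum) :=
      (Finset.sum_fiberwise_of_maps_to (fun M hM => Finset.mem_range.2 (hK M hM)) _).symm
    rw [e]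
    set P := ∏ x ∈ X, (1 - y ^ (w x))⁻¹ with hP
    have hb : ∀ i ∈ Finset.range K,
        ∑ M ∈ S.filter (fun M => M.count x = i), y ^ ((M.map w).sum) ≤ q ^ i * P := by
      intro i _
      set T := (S.filter (fun M => M.count x = i)).image (fun M => M.filter (fun a => a ≠ x)) with hT
      have hdec : ∀ M : Multiset α, M = Multiset.replicate (M.count x) x + M.filter (fun a => a ≠ x) := by
        intro M
        conv_lhs => rw [← Multiset.filter_add_not (fun a => a = x) M]
        rw [Multiset.filter_eq']
      have hinj : Set.InjOn (fun M : Multiset α => M.filter (fun a => a ≠ x))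
          (S.filter (fun M => M.count x = i) : Finset (Multiset α)) := by
        intro M hM M' hM' h
        simp only [Finset.coe_filter, Set.mem_ofPred_eq] at hM hM' h
        rw [hdec M, hdec M', hM.2, hM'.2, h]
      have hT' := ih (fun z hz => hw z (by simp [hz])) T (by
        intro M hM a ha
        simp only [hT, Finset.mem_image, Finset.mem_filter] at hM
        obtain ⟨M', ⟨h1, -⟩, rfl⟩ := hM
        have h2 := Multiset.mem_filter.1 ha
        have := hS M' h1 a h2.1
        exact (Finset.mem_insert.1 this).resolve_left h2.2)
      rw [hT, Finset.sum_image hinj] at hT'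
      calc _ = ∑ M ∈ S.filter (fun M => M.count x = i),
            q ^ i * y ^ (((M.filter (fun a => a ≠ x)).map w).sum) := by
            apply Finset.sum_congr rfl
            intro M hM
            have hc := (Finset.mem_filter.1 hM).2
            conv_lhs => rw [hdec M]
            rw [Multiset.map_add, Multiset.sum_add, Multiset.map_replicate, Multiset.sum_replicate,
              pow_add, hc, hq, ← pow_mul, smul_eq_mul, mul_comm i]
        _ ≤ _ := by
            rw [← Finset.mul_sum]
            exact mul_le_mul_of_nonneg_left hT' (by positivity)
    refine (Finset.sum_le_sum hb).trans ?_
    rw [← Finset.sum_mul]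
    have hPnn : 0 ≤ P := Finset.prod_nonneg (fun z hz => by
      have : y ^ (w z) < 1 := pow_lt_one₀ hy0.le hy1 (by have := hw z (by simp [hz]); omega)
      exact inv_nonneg.2 (by linarith))
    refine mul_le_mul_of_nonneg_right ?_ hPnn
    rw [← tsum_geometric_of_lt_one hq0 hq1]
    exact (summable_geometric_of_lt_one hq0 hq1).sum_le_tsum _ (fun _ _ => by positivity)

/-- If all finite sums over multisets are bounded, so is the product. -/
lemma prod_le_of_sum {α : Type} [DecidableEq α] (X : Finset α) (w : α → ℕ) (hw : ∀ x ∈ X, 1 ≤ w x)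
    {y B : ℝ} (hy0 : 0 < y) (hy1 : y < 1)
    (hB : ∀ S : Finset (Multiset α), (∀ M ∈ S, ∀ a ∈ M, a ∈ X) →
      ∑ M ∈ S, y ^ ((M.map w).sum) ≤ B) :
    ∏ x ∈ X, (1 - y ^ (w x))⁻¹ ≤ B := by
  have hfin : ∀ K : ℕ, ∏ x ∈ X, ∑ i ∈ Finset.range K, (y ^ (w x)) ^ i ≤ B := by
    intro K
    suffices h : ∀ X' : Finset α, ∃ S : Finset (Multiset α), (∀ M ∈ S, ∀ a ∈ M, a ∈ X') ∧
        ∏ x ∈ X', ∑ i ∈ Finset.range K, (y ^ (w x)) ^ i = ∑ M ∈ S, y ^ ((M.map w).sum) by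
      obtain ⟨S, h1, h2⟩ := h X
      rw [h2]
      exact hB S h1
    intro X'
    induction X' using Finset.induction_on with
    | empty => exact ⟨{0}, by simp, by simp⟩
    | insert x X' hx ih =>
      obtain ⟨S, h1, h2⟩ := ih
      refine ⟨(Finset.range K ×ˢ S).image (fun p => Multiset.replicate p.1 x + p.2), ?_, ?_⟩
      · intro M hM a ha
        simp only [Finset.mem_image, Finset.mem_product] at hM
        obtain ⟨⟨i, N⟩, ⟨-, hN⟩, rfl⟩ := hM
        rcases Multiset.mem_add.1 ha with h | h
        · rw [Multiset.eq_of_mem_replicate h]; simp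
        · exact Finset.mem_insert_of_mem (h1 N hN a h)
      · rw [Finset.sum_image, Finset.prod_insert hx, h2, Finset.sum_mul_sum, Finset.sum_product]
        · apply Finset.sum_congr rfl
          intro i _
          apply Finset.sum_congr rfl
          intro M _
          simp only [Multiset.map_add, Multiset.sum_add, Multiset.map_replicate,
            Multiset.sum_replicate, smul_eq_mul, pow_add, ← pow_mul, mul_comm i]
        · rintro ⟨i, M⟩ hM ⟨j, N⟩ hN h
          simp only [Finset.coe_product, Set.mem_prod, Finset.mem_coe] at hM hN h
          have c1 : M.count x = 0 := Multiset.count_eq_zero.2 (fun hh => hx (h1 M hM.2 x hh))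
          have c2 : N.count x = 0 := Multiset.count_eq_zero.2 (fun hh => hx (h1 N hN.2 x hh))
          have hc := congrArg (Multiset.count x) h
          simp only [Multiset.count_add, Multiset.count_replicate_self, c1, c2, add_zero] at hc
          subst hc
          rw [add_right_inj] at h
          rw [h]
  have ht : Filter.Tendsto (fun K : ℕ => ∏ x ∈ X, ∑ i ∈ Finset.range K, (y ^ (w x)) ^ i)
      Filter.atTop (nhds (∏ x ∈ X, (1 - y ^ (w x))⁻¹)) := by
    apply tendsto_finsetProd
    intro x hx
    exact (hasSum_geometric_of_lt_one (by positivity)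
      (pow_lt_one₀ hy0.le hy1 (by have := hw x hx; omega))).tendsto_sum_nat
  exact le_of_tendsto' ht hfin


open Classical in
/-- Connected classes of size at most `N` satisfying `P`. -/
noncomputable def XN (P : Cls → Prop) (N : ℕ) : Finset Cls :=
  (finite_csize_le N).toFinset.filter (fun c => CCon c ∧ P c)

open Classical in
/-- Connected classes of size `n` satisfying `P`. -/
noncomputable def An (P : Cls → Prop) (n : ℕ) : Finset Cls :=
  (finite_csize n).toFinset.filter (fun c => CCon c ∧ P c)

open Classical in
/-- Nonconnected classes of size between 1 and `N` satisfying `P`. -/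
noncomputable def DN (P : Cls → Prop) (N : ℕ) : Finset Cls :=
  (finite_csize_le N).toFinset.filter (fun c => 1 ≤ csize c ∧ ¬ CCon c ∧ P c)

lemma mem_XN {P : Cls → Prop} {N : ℕ} {c : Cls} : c ∈ XN P N ↔ csize c ≤ N ∧ CCon c ∧ P c := by
  simp [XN]

lemma mem_An {P : Cls → Prop} {N : ℕ} {c : Cls} : c ∈ An P N ↔ csize c = N ∧ CCon c ∧ P c := by
  simp [An]

lemma mem_DN {P : Cls → Prop} {N : ℕ} {c : Cls} :
    c ∈ DN P N ↔ csize c ≤ N ∧ 1 ≤ csize c ∧ ¬ CCon c ∧ P c := by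
  simp [DN]

/-- Number of connected classes. -/
noncomputable def cnt (P : Cls → Prop) (n : ℕ) : ℕ := (An P n).card

lemma cnt_zero (P : Cls → Prop) : cnt P 0 = 0 := by
  unfold cnt
  rw [Finset.card_eq_zero, Finset.eq_empty_iff_forall_notMem]
  intro c hc
  rw [mem_An] at hc
  have := hc.2.1.size_pos
  omega

lemma XN_sum (P : Cls → Prop) (N : ℕ) (x : ℝ) :
    ∑ c ∈ XN P N, x ^ csize c = ∑ m ∈ Finset.range (N + 1), (cnt P m : ℝ) * x ^ m := by
  rw [← Finset.sum_fiberwise_of_maps_to (g := csize) (t := Finset.range (N + 1))]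
  · apply Finset.sum_congr rfl
    intro m hm
    have : (XN P N).filter (fun c => csize c = m) = An P m := by
      ext c
      rw [Finset.mem_filter, mem_XN, mem_An]
      rw [Finset.mem_range] at hm
      constructor
      · rintro ⟨h1, h2⟩; exact ⟨h2, h1.2⟩
      · rintro ⟨h1, h2⟩; exact ⟨⟨by omega, h2⟩, h1⟩
    rw [this, Finset.sum_congr rfl (fun c hc => by rw [(mem_An.1 hc).1]), Finset.sum_const,
      nsmul_eq_mul, cnt]
  · intro c hc
    have := (mem_XN.1 hc).1
    simp; omega

lemma XN_prod (P : Cls → Prop) (N : ℕ) (x : ℝ) :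
    ∏ c ∈ XN P N, (1 - x ^ csize c)⁻¹ =
      ∏ m ∈ Finset.Icc 1 N, ((1 - x ^ m)⁻¹) ^ (cnt P m) := by
  rw [← Finset.prod_fiberwise_of_maps_to (g := csize) (t := Finset.Icc 1 N)]
  · apply Finset.prod_congr rfl
    intro m hm
    have : (XN P N).filter (fun c => csize c = m) = An P m := by
      ext c
      rw [Finset.mem_filter, mem_XN, mem_An]
      rw [Finset.mem_Icc] at hm
      constructor
      · rintro ⟨h1, h2⟩; exact ⟨h2, h1.2⟩
      · rintro ⟨h1, h2⟩; exact ⟨⟨by omega, h2⟩, h1⟩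
    rw [this, Finset.prod_congr rfl (fun c hc => by rw [(mem_An.1 hc).1]), Finset.prod_const, cnt]
  · intro c hc
    have := mem_XN.1 hc
    rw [Finset.mem_Icc]
    exact ⟨this.2.1.size_pos, this.1⟩

/-- The empty class. -/
noncomputable def c0 : Cls := cls (⊥ : SimpleGraph (Fin 0))
/-- The one-vertex class. -/
noncomputable def c1 : Cls := cls (⊥ : SimpleGraph (Fin 1))

lemma csize_c0 : csize c0 = 0 := by unfold c0; rw [csize_cls]; simp
lemma csize_c1 : csize c1 = 1 := by unfold c1; rw [csize_cls]; simp
lemma not_con_c0 : ¬ CCon c0 := fun h => by have := h.size_pos; rw [csize_c0] at this; omega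
lemma con_c1 : CCon c1 := (ccon_cls _).2 Connected.of_subsingleton
lemma cog_c1 : CCog c1 := (ccog_cls _).2 (IsCograph.of_card _ (by simp))

lemma two_le_of_not_con {c : Cls} (h : ¬ CCon c) (h1 : 1 ≤ csize c) : 2 ≤ csize c := by
  by_contra hh
  have : c = c1 := csize_one_unique (by omega) csize_c1
  subst this
  exact h con_c1

lemma sum_XN_le {P : Cls → Prop} (hP : ∀ c, P c → CCog c) (hPc : ∀ c, P c → P (ccompl c))
    (N : ℕ) {x : ℝ} (hx : 0 < x) :
    ∑ c ∈ XN P N, x ^ csize c ≤ x + ∑ c ∈ DN P N, x ^ csize c := by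
  classical
  rw [← Finset.sum_filter_add_sum_filter_not (XN P N) (fun c => csize c = 1)]
  apply add_le_add
  · have : (XN P N).filter (fun c => csize c = 1) ⊆ {c1} := by
      intro c hc
      rw [Finset.mem_singleton]
      exact csize_one_unique (Finset.mem_filter.1 hc).2 csize_c1
    calc _ ≤ ∑ c ∈ {c1}, x ^ csize c :=
          Finset.sum_le_sum_of_subset_of_nonneg this (fun _ _ _ => by positivity)
      _ = x := by simp [csize_c1]
  · rw [show ∑ c ∈ (XN P N).filter (fun c => ¬ csize c = 1), x ^ csize c =
      ∑ c ∈ ((XN P N).filter (fun c => ¬ csize c = 1)).image ccompl, x ^ csize c from ?_]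
    · apply Finset.sum_le_sum_of_subset_of_nonneg
      · intro d hd
        obtain ⟨c, hc, rfl⟩ := Finset.mem_image.1 hd
        rw [Finset.mem_filter, mem_XN] at hc
        obtain ⟨⟨h1, h2, h3⟩, h4⟩ := hc
        have := h2.size_pos
        rw [mem_DN, csize_ccompl]
        exact ⟨h1, this, not_ccon_ccompl (hP c h3) (by omega) h2, hPc c h3⟩
      · intro _ _ _; positivity
    · rw [Finset.sum_image (fun _ _ _ _ h => ccompl_inj h)]
      simp only [csize_ccompl]

lemma DN_le {P : Cls → Prop} (hP1 : P c1) (hPc : ∀ c, P c → P (ccompl c))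
    (N : ℕ) (hN : 1 ≤ N) {x : ℝ} (hx : 0 < x) :
    x + ∑ c ∈ DN P N, x ^ csize c ≤ ∑ c ∈ XN P N, x ^ csize c := by
  classical
  have e : x + ∑ c ∈ DN P N, x ^ csize c =
      ∑ c ∈ insert c1 ((DN P N).image ccompl), x ^ csize c := by
    rw [Finset.sum_insert, Finset.sum_image (fun _ _ _ _ h => ccompl_inj h)]
    · simp only [csize_ccompl, csize_c1, pow_one]
    · intro h
      obtain ⟨c, hc, h1⟩ := Finset.mem_image.1 h
      rw [mem_DN] at hc
      have h2 := two_le_of_not_con hc.2.2.1 hc.2.1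
      rw [← csize_ccompl, h1, csize_c1] at h2
      omega
  rw [e]
  apply Finset.sum_le_sum_of_subset_of_nonneg
  · intro d hd
    rw [Finset.mem_insert] at hd
    rcases hd with rfl | hd
    · rw [mem_XN, csize_c1]
      exact ⟨hN, con_c1, hP1⟩
    · obtain ⟨c, hc, rfl⟩ := Finset.mem_image.1 hd
      rw [mem_DN] at hc
      rw [mem_XN, csize_ccompl]
      exact ⟨hc.1, (ccon_or_ccompl hc.2.1).resolve_left hc.2.2.1, hPc c hc.2.2.2⟩
  · intro _ _ _; positivity

lemma key_ineq {P : Cls → Prop} (hPm : ∀ c y, P c → y ∈ comps c → P y)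
    (N : ℕ) (E : Finset Cls) (hE : ∀ e ∈ E, csize e ≤ N + 1 ∧ 1 ≤ csize e ∧ ¬ CCon e ∧ ¬ P e ∧
      ∀ y ∈ comps e, P y) {x : ℝ} (hx : 0 < x) (hx1 : x < 1) :
    1 + ∑ c ∈ XN P N, x ^ csize c + ∑ c ∈ DN P (N + 1), x ^ csize c + ∑ c ∈ E, x ^ csize c ≤
      ∏ c ∈ XN P N, (1 - x ^ csize c)⁻¹ := by
  classical
  have d1 : Disjoint ({c0} : Finset Cls) (XN P N) := by
    rw [Finset.disjoint_singleton_left, mem_XN]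
    exact fun h => not_con_c0 h.2.1
  have d2 : Disjoint ({c0} ∪ XN P N) (DN P (N + 1)) := by
    rw [Finset.disjoint_left]
    intro c hc hd
    rw [mem_DN] at hd
    rw [Finset.mem_union, Finset.mem_singleton, mem_XN] at hc
    rcases hc with rfl | hc
    · rw [csize_c0] at hd; omega
    · exact hd.2.2.1 hc.2.1
  have d3 : Disjoint ({c0} ∪ XN P N ∪ DN P (N + 1)) E := by
    rw [Finset.disjoint_left]
    intro c hc hd
    have he := hE c hd
    rw [Finset.mem_union, Finset.mem_union, Finset.mem_singleton, mem_XN, mem_DN] at hc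
    rcases hc with (rfl | hc) | hc
    · rw [csize_c0] at he; omega
    · exact he.2.2.1 hc.2.1
    · exact he.2.2.2.1 hc.2.2.2
  have e1 : 1 + ∑ c ∈ XN P N, x ^ csize c + ∑ c ∈ DN P (N + 1), x ^ csize c + ∑ c ∈ E, x ^ csize c
      = ∑ c ∈ {c0} ∪ XN P N ∪ DN P (N + 1) ∪ E, x ^ csize c := by
    rw [Finset.sum_union d3, Finset.sum_union d2, Finset.sum_union d1, Finset.sum_singleton,
      csize_c0, pow_zero]
  rw [e1]
  have e2 : ∑ c ∈ {c0} ∪ XN P N ∪ DN P (N + 1) ∪ E, x ^ csize c =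
      ∑ M ∈ ({c0} ∪ XN P N ∪ DN P (N + 1) ∪ E).image comps, x ^ ((M.map csize).sum) := by
    rw [Finset.sum_image (fun _ _ _ _ h => comps_inj h)]
    simp only [← csize_eq_sum]
  rw [e2]
  apply sum_multiset_le _ csize _ hx hx1
  · intro M hM a ha
    obtain ⟨c, hc, rfl⟩ := Finset.mem_image.1 hM
    have hac := ccon_of_mem ha
    rw [Finset.mem_union, Finset.mem_union, Finset.mem_union, Finset.mem_singleton, mem_XN,
      mem_DN] at hc
    rw [mem_XN]
    rcases hc with ((rfl | hc) | hc) | hc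
    · have := csize_lt_of_mem not_con_c0 ha
      rw [csize_c0] at this; omega
    · rw [comps_of_con hc.2.1, Multiset.mem_singleton] at ha
      subst ha
      exact hc
    · have := csize_lt_of_mem hc.2.2.1 ha
      exact ⟨by omega, hac, hPm c a hc.2.2.2 ha⟩
    · have he := hE c hc
      have := csize_lt_of_mem he.2.2.1 ha
      exact ⟨by omega, hac, he.2.2.2.2 a ha⟩
  · intro c hc
    exact (mem_XN.1 hc).2.1.size_pos

lemma exists_glue : ∃ g : Multiset Cls → Cls, ∀ M : Multiset Cls, (∀ y ∈ M, CCon y) →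
    comps (g M) = M := by
  classical
  refine ⟨fun M => if h : ∀ y ∈ M, CCon y then (comps_surj M h).choose else c0, ?_⟩
  intro M h
  simp only [dif_pos h]
  exact (comps_surj M h).choose_spec

lemma ineq_h1 (x τ : ℝ) (hx : 0 < x) (hx1 : x < 1)
    (hτ : ∀ N, ∑ m ∈ Finset.range (N + 1), (cnt CCog m : ℝ) * x ^ m ≤ τ) (N : ℕ) :
    ∏ m ∈ Finset.Icc 1 N, ((1 - x ^ m)⁻¹) ^ (cnt CCog m) ≤ 1 - x + 2 * τ := by
  classical
  rw [← XN_prod]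
  obtain ⟨g, hg⟩ := exists_glue
  apply prod_le_of_sum _ csize (fun c hc => (mem_XN.1 hc).2.1.size_pos) hx hx1
  intro S hS
  have hS' : ∀ M ∈ S, comps (g M) = M :=
    fun M hM => hg M (fun y hy => (mem_XN.1 (hS M hM y hy)).2.1)
  have e : ∑ M ∈ S, x ^ ((M.map csize).sum) = ∑ c ∈ S.image g, x ^ csize c := by
    rw [Finset.sum_image]
    · apply Finset.sum_congr rfl
      intro M hM
      rw [csize_eq_sum, hS' M hM]
    · intro M hM M' hM' h
      rw [← hS' M hM, ← hS' M' hM', h]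
  rw [e]
  set L := (S.image g).sup csize + 1 with hL
  have hsub : S.image g ⊆ {c0} ∪ XN CCog L ∪ DN CCog L := by
    intro c hc
    have h1 : csize c ≤ L := (Finset.le_sup (f := csize) hc).trans (Nat.le_succ _)
    obtain ⟨M, hM, rfl⟩ := Finset.mem_image.1 hc
    have hcog : CCog (g M) := by
      apply ccog_of_comps
      intro y hy
      rw [hS' M hM] at hy
      exact (mem_XN.1 (hS M hM y hy)).2.2
    rw [Finset.mem_union, Finset.mem_union, Finset.mem_singleton, mem_XN, mem_DN]
    by_cases h0 : csize (g M) = 0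
    · exact Or.inl (Or.inl (csize_zero_unique h0 csize_c0))
    · by_cases hcon : CCon (g M)
      · exact Or.inl (Or.inr ⟨h1, hcon, hcog⟩)
      · exact Or.inr ⟨h1, by omega, hcon, hcog⟩
  have hle : ∑ c ∈ S.image g, x ^ csize c ≤
      1 + ∑ c ∈ XN CCog L, x ^ csize c + ∑ c ∈ DN CCog L, x ^ csize c := by
    refine (Finset.sum_le_sum_of_subset_of_nonneg hsub (fun _ _ _ => by positivity)).trans ?_
    have hun : ∀ A B : Finset Cls, ∑ c ∈ A ∪ B, x ^ csize c ≤
        ∑ c ∈ A, x ^ csize c + ∑ c ∈ B, x ^ csize c := by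
      intro A B
      rw [← Finset.sum_union_inter]
      have : 0 ≤ ∑ c ∈ A ∩ B, x ^ csize c := Finset.sum_nonneg (fun _ _ => by positivity)
      linarith
    refine (hun _ _).trans (add_le_add ((hun _ _).trans ?_) le_rfl)
    simp [csize_c0]
  have h2 := DN_le (P := CCog) cog_c1 (fun c h => ccog_ccompl h) L (by omega) hx
  have h3 := hτ L
  rw [← XN_sum] at h3
  linarith

lemma ineq_h3 (x : ℝ) (N : ℕ) (hx : 0 < x) (hx1 : x < 1) :
    ∑ m ∈ Finset.range (N + 2), (cnt CCog m : ℝ) * x ^ m ≤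
      x + ∏ m ∈ Finset.Icc 1 N, ((1 - x ^ m)⁻¹) ^ (cnt CCog m) - 1 -
        ∑ m ∈ Finset.range (N + 1), (cnt CCog m : ℝ) * x ^ m := by
  rw [← XN_prod, ← XN_sum, ← XN_sum]
  have h1 := sum_XN_le (P := CCog) (fun _ h => h) (fun c h => ccog_ccompl h) (N + 1) hx
  have h2 := key_ineq (P := CCog) (fun c y h hy => ccog_of_mem h hy) N ∅ (by simp) hx hx1
  rw [Finset.sum_empty] at h2
  linarith

lemma ineq_h2 (x : ℝ) (N : ℕ) (hx : 0 < x) (hx1 : x < 1) (hN : 9 ≤ N + 1) :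
    ∑ m ∈ Finset.range (N + 2), (cnt CF m : ℝ) * x ^ m ≤
      x - x ^ 9 + ∏ m ∈ Finset.Icc 1 N, ((1 - x ^ m)⁻¹) ^ (cnt CF m) - 1 -
        ∑ m ∈ Finset.range (N + 1), (cnt CF m : ℝ) * x ^ m := by
  rw [← XN_prod, ← XN_sum, ← XN_sum]
  have h1 := sum_XN_le (P := CF) (fun _ h => h.1) (fun c h => cf_ccompl h) (N + 1) hx
  have h2 := key_ineq (P := CF) (fun c y h hy => cf_of_mem h hy) N {cls gA} ?_ hx hx1
  · rw [Finset.sum_singleton, csize_gA] at h2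
    linarith
  · intro e he
    rw [Finset.mem_singleton] at he
    subst he
    refine ⟨by rw [csize_gA]; exact hN, by rw [csize_gA]; omega, gA_not_connected, gA_not_cf, ?_⟩
    intro y hy
    have := csize_lt_of_mem gA_not_connected hy
    rw [csize_gA] at this
    exact cf_of_small (ccog_of_mem ((ccog_cls _).2 gA_cograph) hy) this

lemma cnt_pos (n : ℕ) (hn : 1 ≤ n) : 1 ≤ cnt CCog n := by
  unfold cnt
  rw [Nat.one_le_iff_ne_zero, Finset.card_ne_zero]
  have : Nonempty (Fin n) := ⟨⟨0, hn⟩⟩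
  refine ⟨cls (⊤ : SimpleGraph (Fin n)), mem_An.2 ⟨by rw [csize_cls]; simp, ?_, ?_⟩⟩
  · exact (ccon_cls _).2 connected_top
  · rw [ccog_cls]
    rintro ⟨f, hf⟩
    have := (hf 0 2).1 (by simp)
    rw [pathGraph_adj] at this
    revert this; decide

lemma cnt_le (n : ℕ) : cnt CF n ≤ cnt CCog n := by
  apply Finset.card_le_card
  intro c hc
  rw [mem_An] at hc ⊢
  exact ⟨hc.1, hc.2.1, hc.2.2.1⟩

lemma cnt_mul (m n : ℕ) (hm : 1 ≤ m) (hmn : m < n) : cnt CCog m * cnt CCog n ≤ cnt CCog (m + n) := by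
  classical
  obtain ⟨g, hg⟩ := exists_glue
  unfold cnt
  rw [← Finset.card_product]
  have hcomp : ∀ p ∈ An CCog m ×ˢ An CCog n, comps (g {p.1, p.2}) = {p.1, p.2} := by
    intro p hp
    rw [Finset.mem_product, mem_An, mem_An] at hp
    apply hg
    intro y hy
    simp only [Multiset.insert_eq_cons, Multiset.mem_cons, Multiset.mem_singleton] at hy
    rcases hy with rfl | rfl
    · exact hp.1.2.1
    · exact hp.2.2.1
  apply Finset.card_le_card_of_injOn (fun p => ccompl (g {p.1, p.2}))
  · intro p hp
    have hc := hcomp p hp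
    rw [Finset.mem_coe, Finset.mem_product, mem_An, mem_An] at hp
    have hsz : csize (g {p.1, p.2}) = m + n := by
      rw [csize_eq_sum, hc]
      simp [hp.1.1, hp.2.1]
    rw [Finset.mem_coe, mem_An, csize_ccompl]
    refine ⟨hsz, (ccon_or_ccompl (by omega)).resolve_left ?_, ccog_ccompl (ccog_of_comps ?_)⟩
    · intro h
      have h2 := comps_of_con h
      rw [hc] at h2
      have := congrArg Multiset.card h2
      simp at this
    · intro y hy
      rw [hc] at hy
      simp only [Multiset.insert_eq_cons, Multiset.mem_cons, Multiset.mem_singleton] at hy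
      rcases hy with rfl | rfl
      · exact hp.1.2.2
      · exact hp.2.2.2
  · intro p hp q hq h
    have h1 : comps (g {p.1, p.2}) = comps (g {q.1, q.2}) := by rw [ccompl_inj h]
    rw [hcomp p hp, hcomp q hq] at h1
    rw [Finset.mem_coe, Finset.mem_product, mem_An, mem_An] at hp hq
    have a1 : p.1 ∈ ({q.1, q.2} : Multiset Cls) := by rw [← h1]; simp
    have a2 : p.2 ∈ ({q.1, q.2} : Multiset Cls) := by rw [← h1]; simp
    simp only [Multiset.insert_eq_cons, Multiset.mem_cons, Multiset.mem_singleton] at a1 a2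
    apply Prod.ext
    · rcases a1 with a | a
      · exact a
      · have := congrArg csize a; rw [hp.1.1, hq.2.1] at this; omega
    · rcases a2 with a | a
      · have := congrArg csize a; rw [hp.2.1, hq.1.1] at this; omega
      · exact a

lemma count_bound (n : ℕ) (hn : 1 ≤ n) :
    classCount n (fun G => IsCograph G ∧
      ∃ H : SimpleGraph (Fin n), GenCospectral G H ∧ ¬ Nonempty (G ≃g H)) ≤
      classCount n (fun G => IsCograph G) ∧
    classCount n (fun G => IsCograph G) ≤ classCount n (fun G => IsCograph G ∧
      ∃ H : SimpleGraph (Fin n), GenCospectral G H ∧ ¬ Nonempty (G ≃g H)) + 2 * cnt CF n ∧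
    cnt CCog n ≤ classCount n (fun G => IsCograph G) := by
  classical
  simp only [classCount_eq]
  set A := {c : Cls | ∃ G : SimpleGraph (Fin n), (IsCograph G ∧
      ∃ H : SimpleGraph (Fin n), GenCospectral G H ∧ ¬ Nonempty (G ≃g H)) ∧ cls G = c} with hA
  set B := {c : Cls | ∃ G : SimpleGraph (Fin n), IsCograph G ∧ cls G = c} with hB
  have hBfin : B.Finite := by
    apply (finite_csize n).subset
    rintro c ⟨G, -, rfl⟩
    change csize (cls G) = n
    rw [csize_cls]; simp
  have hAB : A ⊆ B := by
    rintro c ⟨G, hG, rfl⟩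
    exact ⟨G, hG.1, rfl⟩
  have hAfin := hBfin.subset hAB
  refine ⟨Set.ncard_le_ncard hAB hBfin, ?_, ?_⟩
  · have hsub : B ⊆ A ∪ ((An CF n ∪ (An CF n).image ccompl : Finset Cls) : Set Cls) := by
      rintro c ⟨G, hG, rfl⟩
      by_cases hF : IsF G
      · right
        have hsz : csize (cls G) = n := by rw [csize_cls]; simp
        rw [Finset.mem_coe, Finset.mem_union, Finset.mem_image, mem_An]
        rcases ccon_or_ccompl (c := cls G) (by omega) with h | h
        · exact Or.inl ⟨hsz, h, (cf_cls _).2 hF⟩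
        · refine Or.inr ⟨ccompl (cls G), mem_An.2 ⟨by rw [csize_ccompl, hsz], h, ?_⟩,
            ccompl_ccompl _⟩
          exact cf_ccompl ((cf_cls _).2 hF)
      · left
        refine ⟨G, ⟨hG, exists_mate G hG ?_⟩, rfl⟩
        by_contra hh
        push Not at hh
        exact hF ⟨hG, hh.1, hh.2⟩
    have h1 := Set.ncard_le_ncard hsub (hAfin.union (Finset.finite_toSet _))
    have h2 := Set.ncard_union_le A ((An CF n ∪ (An CF n).image ccompl : Finset Cls) : Set Cls)
    rw [Set.ncard_coe_finset] at h2
    have h3 := Finset.card_union_le (An CF n) ((An CF n).image ccompl)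
    have h4 := Finset.card_image_le (s := An CF n) (f := ccompl)
    unfold cnt
    omega
  · unfold cnt
    rw [← Set.ncard_coe_finset]
    apply Set.ncard_le_ncard _ hBfin
    intro c hc
    rw [Finset.mem_coe, mem_An] at hc
    obtain ⟨G, rfl⟩ := exists_rep_of_size hc.1
    exact ⟨G, (ccog_cls _).1 hc.2.2, rfl⟩

/-- **Almost all cographs have a generalized cospectral mate.** -/
theorem almost_all_cographs_have_generalized_cospectral_mate :
    Filter.Tendsto
      (fun n : ℕ =>
        (classCount n (fun G => IsCograph G ∧
            ∃ H : SimpleGraph (Fin n), GenCospectral G H ∧ ¬ Nonempty (G ≃g H)) : ℝ) /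
        (classCount n (fun G => IsCograph G) : ℝ))
      Filter.atTop (nhds 1) := by
  have hmain : Filter.Tendsto (fun n => (cnt CF n : ℝ) / (cnt CCog n : ℝ)) Filter.atTop (nhds 0) :=
    analytic_core (cnt CCog) (cnt CF) 9 (by norm_num) (cnt_zero _) cnt_pos cnt_le cnt_mul
      (fun x τ h0 h1 hτ N => ineq_h1 x τ h0 h1 hτ N)
      (fun x N h0 h1 hN => ineq_h2 x N h0 h1 hN)
      (fun x N h0 h1 => ineq_h3 x N h0 h1)
  have hlow : Filter.Tendsto (fun n => 1 - 2 * ((cnt CF n : ℝ) / (cnt CCog n : ℝ)))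
      Filter.atTop (nhds 1) := by
    have := (hmain.const_mul 2).const_sub 1
    simpa using this
  refine tendsto_of_tendsto_of_tendsto_of_le_of_le' hlow tendsto_const_nhds ?_ ?_
  · filter_upwards [Filter.eventually_ge_atTop 1] with n hn
    obtain ⟨h1, h2, h3⟩ := count_bound n hn
    have ht : (1 : ℝ) ≤ cnt CCog n := by exact_mod_cast cnt_pos n hn
    have h2' : (classCount n (fun G => IsCograph G) : ℝ) ≤ (classCount n (fun G => IsCograph G ∧
      ∃ H : SimpleGraph (Fin n), GenCospectral G H ∧ ¬ Nonempty (G ≃g H)) : ℝ) + 2 * cnt CF n := by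
      exact_mod_cast h2
    have h3' : (cnt CCog n : ℝ) ≤ classCount n (fun G => IsCograph G) := by exact_mod_cast h3
    have hc : (0 : ℝ) < classCount n (fun G => IsCograph G) := by linarith
    rw [le_div_iff₀ hc]
    have h5 : (cnt CF n : ℝ) ≤
        (cnt CF n : ℝ) / (cnt CCog n : ℝ) * classCount n (fun G => IsCograph G) := by
      rw [div_mul_eq_mul_div, le_div_iff₀ (by linarith)]
      exact mul_le_mul_of_nonneg_left h3' (by positivity)
    nlinarith
  · filter_upwards [Filter.eventually_ge_atTop 1] with n hn
    obtain ⟨h1, h2, h3⟩ := count_bound n hn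
    exact div_le_one_of_le₀ (by exact_mod_cast h1) (by positivity)
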